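/- Let 1/2 < t < 1, δ := 1−t, and suppose the positive integer M, the constants K, l > 0 with K ≥ (2/3)^{1/2}, the constants c₁, c₂, d₁, d₂, c_{λ,ν} > 0, positive reals ξ₁, ξ₂, η₁, η₂, positive-valued functions ν₁, ν₂, λ₁, λ₂ : ℕ → ℝ_{>0}, positive integers N₁ < N₀, and the smooth increasing function f : ℝ_{≥1} → ℝ_{>0} satisfy, for all integers n₀ ≥ N₀ and n₁ ≥ N₁: f(n₀) ≥ K·f((1+l)n₀); c₁ξ₁ν₁(n₁)/f(n₁)^{t+δt} ≤ ∑_{n=1}^{n₁-1} f(n)^{-(t+δt)} ≤ c₂ξ₂ν₂(n₁)/f(n₁)^{t+δt}; d₁η₁λ₁(n₁)/f(n₁)^{2t} ≤ ∑_{n=n₁}^{∞} f(n)^{-2t} ≤ d₂η₂λ₂(n₁)/f(n₁)^{2t}; λ₁(n₀) ≥ c_{λ,ν}ν₂(n₀); M ≥ max{4^{1/(1-t)}(c₂ξ₂/(c_{λ,ν}d₁η₁))^{2/(t(1-t))}, (50/K^{t(2-t)})^{2/(1-t)}}; max_{x∈[n₀,n₀+9M²]} f'(x) ≤ (1/4752)M^{-4}f(n₀);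 f(n₀+9M²) ≤ (264M²)^{1/t}f(n₀); and 9M·f(n₀)^t ≤ l·n₀. Fix integers n_max ≥ n₀ ≥ N₀, and let ℛ be a finite family of rectangles with pairwise disjoint interiors satisfying area(ℛ) = ∑_{n=n₀}^{∞} f(n)^{-2t}, perim_δ(ℛ) ≤ M^{-1+δ/2}·∑_{n=1}^{n₀-1} f(n)^{-(t+δt)}, and sup_{R∈ℛ} h(R) ≤ 1. Then the squares of sidelength f(n)^{-t} for n₀ ≤ n < n_max can be packed into ⋃_{R∈ℛ} R. -/

import Mathlib

open Set MeasureTheory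

/-- The axis-parallel square with lower-left corner `c` and sidelength `s`. -/
noncomputable def square (c : ℝ × ℝ) (s : ℝ) : Set (ℝ × ℝ) :=
  Set.Icc c.1 (c.1 + s) ×ˢ Set.Icc c.2 (c.2 + s)

/-- The axis-parallel rectangle with lower-left corner `c`, horizontal sidelength `a`
and vertical sidelength `b`. -/
noncomputable def rectangle (c : ℝ × ℝ) (a b : ℝ) : Set (ℝ × ℝ) :=
  Set.Icc c.1 (c.1 + a) ×ˢ Set.Icc c.2 (c.2 + b)

/-!
The squares are packed greedily, in decreasing order and in blocks of `I * J` consecutive ones with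
`M ≤ I, J ≤ 2 * M`. A box whose sides lie between `M` and `2 * M` times the current sidelength `s n`
takes such a block as a grid of squares. As the sidelengths hardly vary within a block, the grid is
deformed into a pinwheel pattern in which only a tiny rectangular gap opens at each inner vertex.
The waste of the block, namely these gaps and about `I + J` boxes at two sides of the block, then
has a weighted perimeter `perim_δ` of at most `50 / M * s k ^ (1 + δ)` per packed square, and by the
bound on `M` the budget for the perimeter grows faster than that.

The blocks are cut off one after another from strips of breadth `M * s m`, and a strip is cut from
any box of width at least `M * s m`. Such a box always exists: if every box were narrower than
`M * s m`, the remaining area would be at most `perim_δ * (M * s m) ^ (1 - δ)`, and the budget is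
too small for this. Hence the packing never stops.
-/

/-! ### Boxes -/

/-- A closed axis-parallel rectangle, possibly degenerate, as the pair of its two sides. The order
of the product is containment. -/
abbrev Box := NonemptyInterval ℝ × NonemptyInterval ℝ

namespace Box

variable {A B A' B' : Box} {L L' : List Box} {δ c : ℝ}

/-- The set of points of a box. -/
def carrier (A : Box) : Set (ℝ × ℝ) := (A.1 : Set ℝ) ×ˢ (A.2 : Set ℝ)

/-- The box with the points of `rectangle c a b`. -/
def ofRectangle (c : ℝ × ℝ) {a b : ℝ} (ha : 0 ≤ a) (hb : 0 ≤ b) : Box :=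
  (⟨(c.1, c.1 + a), le_add_of_nonneg_right ha⟩, ⟨(c.2, c.2 + b), le_add_of_nonneg_right hb⟩)

/-- The shorter side `w(A)`. -/
noncomputable def width (A : Box) : ℝ := min A.1.length A.2.length

/-- The longer side `h(A)`. -/
noncomputable def height (A : Box) : ℝ := max A.1.length A.2.length

/-- The area of a box. -/
noncomputable def area (A : Box) : ℝ := A.1.length * A.2.length

/-- The weighted perimeter `w(A) ^ δ * h(A)`, the summand of `perim_δ`. -/
noncomputable def perimPow (δ : ℝ) (A : Box) : ℝ := A.width ^ δ * A.height

/-- Two boxes whose interiors are disjoint. -/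
def Apart (A B : Box) : Prop := Disjoint (interior A.carrier) (interior B.carrier)

/-- Boxes that are squares of sidelength `r`. -/
def IsSquare (A : Box) (r : ℝ) : Prop := A.1.length = r ∧ A.2.length = r

/-- The area of a family of boxes. -/
noncomputable def totalArea (L : List Box) : ℝ := (L.map area).sum

/-- The weighted perimeter `perim_δ` of a family of boxes. -/
noncomputable def totalPerim (δ : ℝ) (L : List Box) : ℝ := (L.map (perimPow δ)).sum

lemma carrier_eq_Icc_prod_Icc (A : Box) : A.carrier = Icc A.1.fst A.1.snd ×ˢ Icc A.2.fst A.2.snd :=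
  rfl

@[simp] lemma length_fst_ofRectangle (c : ℝ × ℝ) {a b : ℝ} (ha : 0 ≤ a) (hb : 0 ≤ b) :
    (ofRectangle c ha hb).1.length = a :=
  add_sub_cancel_left _ _

@[simp] lemma length_snd_ofRectangle (c : ℝ × ℝ) {a b : ℝ} (ha : 0 ≤ a) (hb : 0 ≤ b) :
    (ofRectangle c ha hb).2.length = b :=
  add_sub_cancel_left _ _

lemma IsSquare.square_eq_carrier (h : A.IsSquare c) :
    square (A.1.fst, A.2.fst) c = A.carrier := by
  have hfst : A.1.fst + c = A.1.snd := by rw [← h.1, NonemptyInterval.length, add_sub_cancel]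
  have hsnd : A.2.fst + c = A.2.snd := by rw [← h.2, NonemptyInterval.length, add_sub_cancel]
  rw [square, hfst, hsnd, carrier_eq_Icc_prod_Icc]

lemma carrier_subset_carrier (h : A ≤ B) : A.carrier ⊆ B.carrier :=
  prod_mono (NonemptyInterval.coe_subset_coe.2 h.1) (NonemptyInterval.coe_subset_coe.2 h.2)

lemma Apart.symm (h : A.Apart B) : B.Apart A := Disjoint.symm h

lemma Apart.mono (h : A.Apart B) (hA : A' ≤ A) (hB : B' ≤ B) : A'.Apart B' :=
  Disjoint.mono (interior_mono (carrier_subset_carrier hA))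
    (interior_mono (carrier_subset_carrier hB)) h

lemma interior_carrier (A : Box) :
    interior A.carrier = Ioo A.1.fst A.1.snd ×ˢ Ioo A.2.fst A.2.snd := by
  rw [carrier_eq_Icc_prod_Icc, interior_prod_eq, interior_Icc, interior_Icc]

lemma apart_of_fst_snd_le (h : A.1.snd ≤ B.1.fst) : A.Apart B := by
  rw [Apart, interior_carrier, interior_carrier, disjoint_prod, Ioo_disjoint_Ioo]
  exact .inl <| (min_le_left _ _).trans <| h.trans (le_max_right _ _)

lemma apart_of_snd_snd_le (h : A.2.snd ≤ B.2.fst) : A.Apart B := by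
  rw [Apart, interior_carrier, interior_carrier, disjoint_prod, Ioo_disjoint_Ioo, Ioo_disjoint_Ioo]
  exact .inr <| (min_le_left _ _).trans <| h.trans (le_max_right _ _)

lemma width_nonneg (A : Box) : 0 ≤ A.width := le_min A.1.length_nonneg A.2.length_nonneg

lemma height_nonneg (A : Box) : 0 ≤ A.height := A.1.length_nonneg.trans (le_max_left _ _)

lemma area_nonneg (A : Box) : 0 ≤ A.area := mul_nonneg A.1.length_nonneg A.2.length_nonneg

lemma perimPow_nonneg (δ : ℝ) (A : Box) : 0 ≤ A.perimPow δ :=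
  mul_nonneg (Real.rpow_nonneg A.width_nonneg δ) A.height_nonneg

lemma width_mul_height (A : Box) : A.width * A.height = A.area := min_mul_max _ _

lemma length_fst_mono (h : A ≤ B) : A.1.length ≤ B.1.length := sub_le_sub h.1.2 h.1.1

lemma length_snd_mono (h : A ≤ B) : A.2.length ≤ B.2.length := sub_le_sub h.2.2 h.2.1

lemma width_mono (h : A ≤ B) : A.width ≤ B.width :=
  min_le_min (length_fst_mono h) (length_snd_mono h)

lemma height_mono (h : A ≤ B) : A.height ≤ B.height :=
  max_le_max (length_fst_mono h) (length_snd_mono h)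

lemma perimPow_mono (hδ : 0 ≤ δ) (h : A ≤ B) : A.perimPow δ ≤ B.perimPow δ :=
  mul_le_mul (Real.rpow_le_rpow A.width_nonneg (width_mono h) hδ) (height_mono h)
    A.height_nonneg (Real.rpow_nonneg B.width_nonneg δ)

lemma perimPow_le_rpow (hδ : 0 ≤ δ) (h : A.height ≤ c) : A.perimPow δ ≤ c ^ (1 + δ) := by
  have hc : 0 ≤ c := A.height_nonneg.trans h
  rw [perimPow, add_comm, Real.rpow_add_one' hc (by positivity)]
  have hwidth : A.width ≤ c := min_le_max.trans h
  exact mul_le_mul (Real.rpow_le_rpow A.width_nonneg hwidth hδ) h A.height_nonneg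
    (Real.rpow_nonneg hc δ)

lemma area_le_perimPow_mul (hδ₀ : 0 ≤ δ) (hδ₁ : δ ≤ 1) (h : A.width ≤ c) :
    A.area ≤ A.perimPow δ * c ^ (1 - δ) := by
  have hδ : 0 ≤ 1 - δ := sub_nonneg.2 hδ₁
  calc A.area = A.width ^ (δ + (1 - δ)) * A.height := by
        rw [add_sub_cancel, Real.rpow_one, width_mul_height]
    _ = A.perimPow δ * A.width ^ (1 - δ) := by
        rw [Real.rpow_add_of_nonneg A.width_nonneg hδ₀ hδ, perimPow]; ring
    _ ≤ A.perimPow δ * c ^ (1 - δ) :=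
        mul_le_mul_of_nonneg_left (Real.rpow_le_rpow A.width_nonneg h hδ) (A.perimPow_nonneg δ)

@[simp] lemma totalArea_cons (A : Box) (L : List Box) :
    totalArea (A :: L) = A.area + totalArea L := by
  simp [totalArea]

@[simp] lemma totalArea_append (L L' : List Box) :
    totalArea (L ++ L') = totalArea L + totalArea L' := by
  simp [totalArea]

@[simp] lemma totalPerim_cons (δ : ℝ) (A : Box) (L : List Box) :
    totalPerim δ (A :: L) = A.perimPow δ + totalPerim δ L := by
  simp [totalPerim]

@[simp] lemma totalPerim_append (δ : ℝ) (L L' : List Box) :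
    totalPerim δ (L ++ L') = totalPerim δ L + totalPerim δ L' := by
  simp [totalPerim]

lemma totalArea_nonneg (L : List Box) : 0 ≤ totalArea L :=
  List.sum_nonneg fun _ h => by
    obtain ⟨A, -, rfl⟩ := List.mem_map.1 h
    exact A.area_nonneg

lemma totalArea_perm (h : L.Perm L') : totalArea L = totalArea L' := (h.map area).sum_eq

lemma totalPerim_perm (δ : ℝ) (h : L.Perm L') : totalPerim δ L = totalPerim δ L' :=
  (h.map (perimPow δ)).sum_eq

lemma totalArea_le_totalPerim_mul (hδ₀ : 0 ≤ δ) (hδ₁ : δ ≤ 1) (h : ∀ A ∈ L, A.width ≤ c) :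
    totalArea L ≤ totalPerim δ L * c ^ (1 - δ) := by
  rw [totalArea, totalPerim, ← List.sum_map_mul_right]
  exact List.sum_le_sum fun A hA => area_le_perimPow_mul hδ₀ hδ₁ (h A hA)

/-- The box with sides `I` and `J`, in this order or, if `o` is false, in the other one. It allows
a strip to be cut off along the shorter side of a box without losing generality. -/
def orient (o : Bool) (I J : NonemptyInterval ℝ) : Box := if o then (I, J) else (J, I)

section orient

variable {o : Bool} {I J I' J' : NonemptyInterval ℝ}

lemma exists_orient_eq (A : Box) :
    ∃ o I J, orient o I J = A ∧ I.length = A.width ∧ A.width ≤ J.length := by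
  rcases le_total A.1.length A.2.length with h | h
  · exact ⟨true, A.1, A.2, rfl, (min_eq_left h).symm, min_le_right _ _⟩
  · exact ⟨false, A.2, A.1, rfl, (min_eq_right h).symm, min_le_left _ _⟩

lemma orient_mono (hI : I ≤ I') (hJ : J ≤ J') : orient o I J ≤ orient o I' J' := by
  cases o <;> exact ⟨‹_›, ‹_›⟩

lemma orient_apart_left (h : I.snd ≤ I'.fst) : (orient o I J).Apart (orient o I' J') := by
  cases o
  exacts [apart_of_snd_snd_le h, apart_of_fst_snd_le h]

lemma orient_apart_right (h : J.snd ≤ J'.fst) : (orient o I J).Apart (orient o I' J') := by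
  cases o
  exacts [apart_of_fst_snd_le h, apart_of_snd_snd_le h]

lemma area_orient : (orient o I J).area = I.length * J.length := by
  cases o
  exacts [mul_comm _ _, rfl]

lemma width_orient : (orient o I J).width = min I.length J.length := by
  cases o
  exacts [min_comm _ _, rfl]

lemma height_orient : (orient o I J).height = max I.length J.length := by
  cases o
  exacts [max_comm _ _, rfl]

end orient

end Box

lemma exists_cut (I : NonemptyInterval ℝ) {r : ℝ} (hr₀ : 0 ≤ r) (hr : r ≤ I.length) :
    ∃ I₁ ≤ I, ∃ I₂ ≤ I, I₁.snd ≤ I₂.fst ∧ I₁.length = r ∧ I₂.length = I.length - r := by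
  have hsnd : I.fst + r ≤ I.snd := by linarith [show I.length = I.snd - I.fst from rfl]
  refine ⟨⟨(I.fst, I.fst + r), by simpa⟩, ⟨le_rfl, hsnd⟩, ⟨(I.fst + r, I.snd), hsnd⟩,
    ⟨?_, le_rfl⟩, le_rfl, ?_, ?_⟩ <;> simp [NonemptyInterval.length, hr₀]
  ring

/-! ### Pinwheel grids -/

lemma sum_range_mul_sub_by_parts {R : Type*} [CommRing R] {z : ℕ → R} {I : ℕ} (hz₀ : z 0 = 0)
    (hz : z (I + 1) = 0) (u : ℕ → R) :
    ∑ i ∈ Finset.range I, z (i + 1) * (u (i + 1) - u i) =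
      ∑ i ∈ Finset.range (I + 1), (z i - z (i + 1)) * u i := by
  simp only [mul_sub, sub_mul, Finset.sum_sub_distrib]
  rw [Finset.sum_range_succ' fun i => z i * u i, Finset.sum_range_succ fun i => z (i + 1) * u i,
    hz₀, hz, zero_mul, zero_mul, add_zero, add_zero]

lemma sum_range_succ_sub_add_sum_range_sub {G : Type*} [AddCommGroup G] (u v : ℕ → G) (J : ℕ) :
    ∑ j ∈ Finset.range (J + 1), (u j - v j) + ∑ j ∈ Finset.range J, (v (j + 1) - u j) =
      u J - v 0 := by
  induction J with
  | zero => simp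
  | succ J ih =>
    rw [Finset.sum_range_succ, Finset.sum_range_succ fun j => v (j + 1) - u j,
      add_add_add_comm, ih]
    abel

/-- The indices, column first, of the cells of a grid with `I` columns and `J` rows. -/
abbrev gridIndices (I J : ℕ) : Finset (ℕ × ℕ) := Finset.range I ×ˢ Finset.range J

/-- A subdivision of the box `B` into `I + 1` columns and `J + 1` rows, deformed so that a
rectangular gap opens at each of the `I * J` inner vertices. The cell in column `i` and row `j`
has the lower left corner `(x i j, y i j)`; its right side is where the next cell of the row
begins, and its upper side is where the next cell of the column begins. -/
structure PinwheelGrid (I J : ℕ) (B : Box) where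
  /-- The abscissa at which the cell in column `i` and row `j` begins. -/
  x : ℕ → ℕ → ℝ
  /-- The ordinate at which the cell in column `i` and row `j` begins. -/
  y : ℕ → ℕ → ℝ
  x_mono_left : ∀ j, Monotone fun i => x i j
  x_anti_right : ∀ i, Antitone (x i)
  y_mono_left : ∀ j, Monotone fun i => y i j
  y_mono_right : ∀ i, Monotone (y i)
  x_zero : ∀ j, x 0 j = B.1.fst
  x_last : ∀ j, x (I + 1) j = B.1.snd
  y_zero : ∀ i, y i 0 = B.2.fst
  y_last : ∀ i, y i (J + 1) = B.2.snd

namespace PinwheelGrid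

variable {I J : ℕ} {B : Box} (G : PinwheelGrid I J B)

lemma x_le_x {i i' j j' : ℕ} (hi : i ≤ i') (hj : j' ≤ j) : G.x i j ≤ G.x i' j' :=
  (G.x_mono_left j hi).trans (G.x_anti_right i' hj)

lemma y_le_y {i i' j j' : ℕ} (hi : i ≤ i') (hj : j ≤ j') : G.y i j ≤ G.y i' j' :=
  (G.y_mono_left j hi).trans (G.y_mono_right i' hj)

lemma x_mem_Icc {i : ℕ} (hi : i ≤ I + 1) (j : ℕ) : G.x i j ∈ Icc B.1.fst B.1.snd :=
  ⟨G.x_zero j ▸ G.x_le_x (Nat.zero_le i) le_rfl, G.x_last j ▸ G.x_le_x hi le_rfl⟩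

lemma y_mem_Icc (i : ℕ) {j : ℕ} (hj : j ≤ J + 1) : G.y i j ∈ Icc B.2.fst B.2.snd :=
  ⟨G.y_zero i ▸ G.y_le_y le_rfl (Nat.zero_le j), G.y_last i ▸ G.y_le_y le_rfl hj⟩

/-- The cell in column `q.1` and row `q.2`. -/
def cell (q : ℕ × ℕ) : Box :=
  (⟨(G.x q.1 q.2, G.x (q.1 + 1) q.2), G.x_le_x (by omega) le_rfl⟩,
    ⟨(G.y q.1 q.2, G.y q.1 (q.2 + 1)), G.y_le_y le_rfl (by omega)⟩)

/-- The gap that opens at the upper right vertex of the cell `q`. -/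
def gap (q : ℕ × ℕ) : Box :=
  (⟨(G.x (q.1 + 1) (q.2 + 1), G.x (q.1 + 1) q.2), G.x_le_x le_rfl (by omega)⟩,
    ⟨(G.y q.1 (q.2 + 1), G.y (q.1 + 1) (q.2 + 1)), G.y_le_y (by omega) le_rfl⟩)

lemma cell_le {q : ℕ × ℕ} (hI : q.1 ≤ I) (hJ : q.2 ≤ J) : G.cell q ≤ B :=
  ⟨⟨(G.x_mem_Icc (by omega) _).1, (G.x_mem_Icc (by omega) _).2⟩,
    ⟨(G.y_mem_Icc _ (by omega)).1, (G.y_mem_Icc _ (by omega)).2⟩⟩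

lemma gap_le {q : ℕ × ℕ} (hI : q.1 ≤ I) (hJ : q.2 ≤ J) : G.gap q ≤ B :=
  ⟨⟨(G.x_mem_Icc (by omega) _).1, (G.x_mem_Icc (by omega) _).2⟩,
    ⟨(G.y_mem_Icc _ (by omega)).1, (G.y_mem_Icc _ (by omega)).2⟩⟩

lemma cell_apart_cell {q r : ℕ × ℕ} (h : q ≠ r) : (G.cell q).Apart (G.cell r) := by
  have hcases : q.1 ≤ r.1 ∧ q.2 < r.2 ∨ q.1 < r.1 ∧ r.2 ≤ q.2 ∨
      r.1 ≤ q.1 ∧ r.2 < q.2 ∨ r.1 < q.1 ∧ q.2 ≤ r.2 := by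
    rw [Ne, Prod.ext_iff] at h
    omega
  rcases hcases with ⟨hi, hj⟩ | ⟨hi, hj⟩ | ⟨hi, hj⟩ | ⟨hi, hj⟩
  · exact Box.apart_of_snd_snd_le (G.y_le_y hi hj)
  · exact Box.apart_of_fst_snd_le (G.x_le_x hi hj)
  · exact (Box.apart_of_snd_snd_le (G.y_le_y hi hj)).symm
  · exact (Box.apart_of_fst_snd_le (G.x_le_x hi hj)).symm

lemma gap_apart_gap {q r : ℕ × ℕ} (h : q ≠ r) : (G.gap q).Apart (G.gap r) := by
  have hcases : q.1 < r.1 ∧ q.2 ≤ r.2 ∨ q.1 ≤ r.1 ∧ r.2 < q.2 ∨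
      r.1 < q.1 ∧ r.2 ≤ q.2 ∨ r.1 ≤ q.1 ∧ q.2 < r.2 := by
    rw [Ne, Prod.ext_iff] at h
    omega
  rcases hcases with ⟨hi, hj⟩ | ⟨hi, hj⟩ | ⟨hi, hj⟩ | ⟨hi, hj⟩
  · exact Box.apart_of_snd_snd_le (G.y_le_y hi (by omega))
  · exact Box.apart_of_fst_snd_le (G.x_le_x (by omega) hj)
  · exact (Box.apart_of_snd_snd_le (G.y_le_y hi (by omega))).symm
  · exact (Box.apart_of_fst_snd_le (G.x_le_x (by omega) hj)).symm

lemma cell_apart_gap (q r : ℕ × ℕ) : (G.cell q).Apart (G.gap r) := by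
  rcases le_or_gt q.1 r.1 with hi | hi <;> rcases le_or_gt q.2 r.2 with hj | hj
  · exact Box.apart_of_snd_snd_le (G.y_le_y hi (by omega))
  · exact Box.apart_of_fst_snd_le (G.x_le_x (by omega) hj)
  · exact (Box.apart_of_fst_snd_le (G.x_le_x hi hj)).symm
  · exact (Box.apart_of_snd_snd_le (G.y_le_y hi hj)).symm

/-- The cells and gaps of a grid as one family. -/
def tile : (ℕ × ℕ) ⊕ (ℕ × ℕ) → Box := Sum.elim G.cell G.gap

lemma tile_apart_tile {q r : (ℕ × ℕ) ⊕ (ℕ × ℕ)} (h : q ≠ r) : (G.tile q).Apart (G.tile r) := by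
  rcases q with q | q <;> rcases r with r | r
  · exact G.cell_apart_cell fun hqr => h (congrArg _ hqr)
  · exact G.cell_apart_gap q r
  · exact (G.cell_apart_gap r q).symm
  · exact G.gap_apart_gap fun hqr => h (congrArg _ hqr)

/-- The signed area below a broken line: the heights are those at which row `k` begins, the widths
are those of the cells of row `j`. -/
def areaBelow (j k : ℕ) : ℝ := ∑ i ∈ Finset.range (I + 1), (G.x (i + 1) j - G.x i j) * G.y i k

lemma sum_area_cell_row (j : ℕ) :
    ∑ i ∈ Finset.range (I + 1), (G.cell (i, j)).area =
      G.areaBelow j (j + 1) - G.areaBelow j j := by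
  simp only [areaBelow, ← Finset.sum_sub_distrib, ← mul_sub]
  rfl

lemma sum_area_gap_row (j : ℕ) :
    ∑ i ∈ Finset.range I, (G.gap (i, j)).area =
      G.areaBelow (j + 1) (j + 1) - G.areaBelow j (j + 1) := by
  have hparts := sum_range_mul_sub_by_parts (z := fun i => G.x i j - G.x i (j + 1)) (I := I)
    (by simp [G.x_zero]) (by simp [G.x_last]) fun i => G.y i (j + 1)
  simp only [areaBelow, ← Finset.sum_sub_distrib, ← sub_mul]
  refine hparts.trans (Finset.sum_congr rfl fun i _ => ?_)
  ring

lemma sum_length_row (j : ℕ) :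
    ∑ i ∈ Finset.range (I + 1), (G.x (i + 1) j - G.x i j) = B.1.length := by
  rw [Finset.sum_range_sub (G.x · j), G.x_last, G.x_zero, NonemptyInterval.length]

lemma sum_area_cell_add_sum_area_gap :
    ∑ q ∈ gridIndices (I + 1) (J + 1), (G.cell q).area +
      ∑ q ∈ gridIndices I J, (G.gap q).area = B.area := by
  rw [Finset.sum_product_right, Finset.sum_product_right]
  simp only [sum_area_cell_row, sum_area_gap_row]
  rw [sum_range_succ_sub_add_sum_range_sub (fun j => G.areaBelow j (j + 1))
    fun j => G.areaBelow j j]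
  simp only [areaBelow, G.y_last, G.y_zero, ← Finset.sum_mul, sum_length_row]
  rw [← mul_sub, Box.area, NonemptyInterval.length, NonemptyInterval.length]

/-- The inner cells, in the order in which they receive the squares: row by row, from right to
left. -/
def innerIndex (I k : ℕ) : ℕ × ℕ := (I - 1 - k % I, k / I)

lemma injOn_innerIndex (I J : ℕ) : InjOn (innerIndex I) (Finset.range (I * J)) := by
  intro k hk k' _ hkk'
  have hI : 0 < I := Nat.pos_of_mul_pos_right <| (Nat.zero_le k).trans_lt (Finset.mem_range.1 hk)
  have hmod := Nat.mod_lt k hI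
  have hmod' := Nat.mod_lt k' hI
  obtain ⟨hcol, hrow⟩ := Prod.mk.inj hkk'
  rw [← Nat.div_add_mod k I, ← Nat.div_add_mod k' I, hrow, show k % I = k' % I by omega]

lemma image_innerIndex (I J : ℕ) :
    (Finset.range (I * J)).image (innerIndex I) = gridIndices I J := by
  refine Finset.eq_of_subset_of_card_le (Finset.image_subset_iff.2 fun k hk => ?_) ?_
  · have hk : k < I * J := Finset.mem_range.1 hk
    have hI : 0 < I := Nat.pos_of_mul_pos_right <| (Nat.zero_le k).trans_lt hk
    simp only [innerIndex, Finset.mem_product, Finset.mem_range]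
    exact ⟨by omega, Nat.div_lt_of_lt_mul hk⟩
  · rw [Finset.card_image_of_injOn (injOn_innerIndex I J)]
    simp

lemma innerIndex_mem {k : ℕ} (hk : k < I * J) :
    (innerIndex I k).1 < I ∧ (innerIndex I k).2 < J := by
  have := Finset.mem_image_of_mem (innerIndex I) (Finset.mem_range.2 hk)
  simpa [image_innerIndex] using this

/-- The tiles that do not receive a square: the cells of the last row and column, and the gaps. -/
noncomputable def waste : List Box :=
  ((gridIndices (I + 1) (J + 1) \ gridIndices I J).disjSum (gridIndices I J)).toList.map G.tile

lemma sum_map_waste (F : Box → ℝ) :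
    (G.waste.map F).sum =
      ∑ q ∈ gridIndices (I + 1) (J + 1) \ gridIndices I J, F (G.cell q) +
        ∑ q ∈ gridIndices I J, F (G.gap q) := by
  rw [waste, List.map_map, Finset.sum_map_toList, Finset.sum_disjSum]
  rfl

lemma le_of_mem_waste {R : Box} (hR : R ∈ G.waste) : R ≤ B := by
  obtain ⟨q | q, hq, rfl⟩ := List.mem_map.1 hR <;>
    simp only [Finset.mem_toList, Finset.inl_mem_disjSum, Finset.inr_mem_disjSum, Finset.mem_sdiff,
      Finset.mem_product, Finset.mem_range] at hq
  · exact G.cell_le (by omega) (by omega)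
  · exact G.gap_le (by omega) (by omega)

lemma pairwise_waste : G.waste.Pairwise Box.Apart :=
  List.pairwise_map.2 <| (Finset.nodup_toList _).imp G.tile_apart_tile

lemma cell_apart_waste {q : ℕ × ℕ} (hq : q ∈ gridIndices I J) {R : Box} (hR : R ∈ G.waste) :
    (G.cell q).Apart R := by
  obtain ⟨r, hr, rfl⟩ := List.mem_map.1 hR
  refine G.tile_apart_tile (q := .inl q) ?_
  rintro rfl
  rw [Finset.mem_toList, Finset.inl_mem_disjSum, Finset.mem_sdiff] at hr
  exact hr.2 hq

lemma totalArea_waste :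
    Box.totalArea G.waste + ∑ q ∈ gridIndices I J, (G.cell q).area = B.area := by
  have hsub : gridIndices I J ⊆ gridIndices (I + 1) (J + 1) :=
    Finset.product_subset_product (Finset.range_mono I.le_succ) (Finset.range_mono J.le_succ)
  rw [← G.sum_area_cell_add_sum_area_gap, ← Finset.sum_sdiff hsub, Box.totalArea, sum_map_waste]
  ring

lemma totalPerim_waste_le {δ u e : ℝ} (hδ : 0 ≤ δ)
    (hcell : ∀ q ∈ gridIndices (I + 1) (J + 1), (G.cell q).height ≤ u)
    (hgap : ∀ q ∈ gridIndices I J, (G.gap q).height ≤ e) :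
    Box.totalPerim δ G.waste ≤ (I + J + 1) * u ^ (1 + δ) + I * J * e ^ (1 + δ) := by
  have hcard : (gridIndices (I + 1) (J + 1) \ gridIndices I J).card = I + J + 1 := by
    rw [Finset.card_sdiff_of_subset (Finset.product_subset_product
      (Finset.range_mono I.le_succ) (Finset.range_mono J.le_succ)), Finset.card_product,
      Finset.card_product]
    simp only [Finset.card_range]
    rw [show (I + 1) * (J + 1) = I + J + 1 + I * J by ring, Nat.add_sub_cancel]
  have hcells := Finset.sum_le_card_nsmul (gridIndices (I + 1) (J + 1) \ gridIndices I J)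
    (fun q => (G.cell q).perimPow δ) _
    fun q hq => Box.perimPow_le_rpow hδ (hcell q (Finset.mem_sdiff.1 hq).1)
  have hgaps := Finset.sum_le_card_nsmul (gridIndices I J) (fun q => (G.gap q).perimPow δ) _
    fun q hq => Box.perimPow_le_rpow hδ (hgap q hq)
  rw [Box.totalPerim, sum_map_waste]
  refine (add_le_add hcells hgaps).trans_eq ?_
  simp [hcard, Finset.card_product]

end PinwheelGrid

/-- The squares `Q k` of sidelength `g k`, `k < N`, lie in the box `B`, and the boxes of `W` fill
the rest of `B`. -/
structure IsBlockPacking (g : ℕ → ℝ) (N : ℕ) (B : Box) (Q : ℕ → Box) (W : List Box) : Prop where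
  isSquare : ∀ k < N, (Q k).IsSquare (g k)
  square_le : ∀ k < N, Q k ≤ B
  square_apart : ∀ k < N, ∀ k' < N, k ≠ k' → (Q k).Apart (Q k')
  waste_le : ∀ R ∈ W, R ≤ B
  waste_pairwise : W.Pairwise Box.Apart
  square_apart_waste : ∀ k < N, ∀ R ∈ W, (Q k).Apart R
  area_eq : Box.totalArea W + ∑ k ∈ Finset.range N, g k ^ 2 = B.area

lemma Box.IsSquare.area_eq {A : Box} {r : ℝ} (h : A.IsSquare r) : A.area = r ^ 2 := by
  rw [Box.area, h.1, h.2, sq]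

open PinwheelGrid in
lemma PinwheelGrid.isBlockPacking {g : ℕ → ℝ} {I J : ℕ} {B : Box} (G : PinwheelGrid I J B)
    (h : ∀ k < I * J, (G.cell (innerIndex I k)).IsSquare (g k)) :
    IsBlockPacking g (I * J) B (fun k => G.cell (innerIndex I k)) G.waste where
  isSquare := h
  square_le k hk := G.cell_le (innerIndex_mem hk).1.le (innerIndex_mem hk).2.le
  square_apart k hk k' hk' hkk' := G.cell_apart_cell <|
    (injOn_innerIndex I J).ne (Finset.mem_range.2 hk) (Finset.mem_range.2 hk') hkk'
  waste_le _ := G.le_of_mem_waste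
  waste_pairwise := G.pairwise_waste
  square_apart_waste k hk _ := G.cell_apart_waste <| by simpa using innerIndex_mem hk
  area_eq := by
    rw [← G.totalArea_waste, ← image_innerIndex, Finset.sum_image (injOn_innerIndex I J)]
    congr 1
    exact Finset.sum_congr rfl fun k hk => (h k (Finset.mem_range.1 hk)).area_eq.symm

/-- The partial sums of `τ`, started at `a`, as long as the index is at most `N`, and `b` from then
on: the end points of a stack of `N` intervals of lengths `τ k` and a remaining one up to `b`. -/
noncomputable def stackCoord (a b : ℝ) (N : ℕ) (τ : ℕ → ℝ) (i : ℕ) : ℝ :=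
  if i ≤ N then a + ∑ k ∈ Finset.range i, τ k else b

section stackCoord

variable {a b c c' : ℝ} {N : ℕ} {τ τ' : ℕ → ℝ}

lemma stackCoord_zero : stackCoord a b N τ 0 = a := by simp [stackCoord]

lemma stackCoord_of_lt {i : ℕ} (hi : N < i) : stackCoord a b N τ i = b := if_neg hi.not_ge

lemma stackCoord_succ_sub {i : ℕ} (hi : i < N) :
    stackCoord a b N τ (i + 1) - stackCoord a b N τ i = τ i := by
  rw [stackCoord, stackCoord, if_pos (Nat.succ_le_of_lt hi), if_pos hi.le, Finset.sum_range_succ]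
  ring

lemma stackCoord_mem_Icc (hτ : ∀ k < N, τ k ∈ Icc c' c) {i : ℕ} (hi : i ≤ N) :
    stackCoord a b N τ i ∈ Icc (a + i * c') (a + i * c) := by
  have hτi (k : ℕ) (hk : k ∈ Finset.range i) := hτ k ((Finset.mem_range.1 hk).trans_le hi)
  have hlower := Finset.card_nsmul_le_sum (Finset.range i) τ c' fun k hk => (hτi k hk).1
  have hupper := Finset.sum_le_card_nsmul (Finset.range i) τ c fun k hk => (hτi k hk).2
  rw [Finset.card_range, nsmul_eq_mul] at hlower hupper
  rw [stackCoord, if_pos hi]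
  exact ⟨by gcongr, by gcongr⟩

lemma monotone_stackCoord (hτ : ∀ k < N, τ k ∈ Icc 0 c) (hab : N * c ≤ b - a) :
    Monotone (stackCoord a b N τ) := by
  refine monotone_nat_of_le_succ fun i => ?_
  rcases lt_trichotomy i N with hi | rfl | hi
  · rw [← sub_nonneg, stackCoord_succ_sub hi]
    exact (hτ i hi).1
  · rw [stackCoord_of_lt i.lt_succ_self]
    linarith [(stackCoord_mem_Icc (a := a) (b := b) hτ le_rfl).2]
  · rw [stackCoord_of_lt hi, stackCoord_of_lt (hi.trans i.lt_succ_self)]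

lemma stackCoord_le_stackCoord (h : τ ≤ τ') (i : ℕ) :
    stackCoord a b N τ i ≤ stackCoord a b N τ' i := by
  unfold stackCoord
  split_ifs
  · gcongr
    exact h _
  · rfl

lemma stackCoord_succ_sub_le (hτ : ∀ k < N, τ k ∈ Icc c' c) (hc : 0 ≤ c)
    (hab : b - a ≤ (N + 1) * c) (hNc : N * (c - c') ≤ c) {i : ℕ} (hi : i ≤ N) :
    stackCoord a b N τ (i + 1) - stackCoord a b N τ i ≤ 2 * c := by
  rcases hi.lt_or_eq with hi | rfl
  · rw [stackCoord_succ_sub hi]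
    linarith [(hτ i hi).2]
  · rw [stackCoord_of_lt i.lt_succ_self]
    linarith [(stackCoord_mem_Icc (a := a) (b := b) hτ le_rfl).1]

lemma stackCoord_sub_le (hτ : ∀ k < N, τ k ∈ Icc c' c) (hτ' : ∀ k < N, τ' k ∈ Icc c' c)
    (hc : c' ≤ c) {i : ℕ} (hi : i ≤ N) :
    stackCoord a b N τ i - stackCoord a b N τ' i ≤ N * (c - c') := by
  have hiN : (i : ℝ) * (c - c') ≤ N * (c - c') := by
    have := sub_nonneg.2 hc
    gcongr
  linarith [(stackCoord_mem_Icc (a := a) (b := b) hτ hi).2,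
    (stackCoord_mem_Icc (a := a) (b := b) hτ' hi).1]

end stackCoord

namespace PinwheelGrid

variable {g : ℕ → ℝ} {I J : ℕ} {B : Box}

/-- The square that goes into column `i` and row `j`; it inverts `innerIndex`. As the sidelengths
decrease, the right to left order within a row makes the ordinates increase with the column. -/
def squareIndex (I i j : ℕ) : ℕ := j * I + (I - 1 - i)

lemma squareIndex_innerIndex {k : ℕ} (hI : 0 < I) :
    squareIndex I (innerIndex I k).1 (innerIndex I k).2 = k := by
  have := Nat.mod_lt k hI
  have := Nat.div_add_mod' k I
  simp only [squareIndex, innerIndex]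
  omega

lemma squareIndex_le {i j : ℕ} (hj : j ≤ J) : squareIndex I i j ≤ I * (J + 1) :=
  calc j * I + (I - 1 - i) ≤ J * I + I := by gcongr; omega
    _ = I * (J + 1) := by ring

lemma apply_squareIndex_mem_Icc (hg : Antitone g) {i j : ℕ} (hj : j ≤ J) :
    g (squareIndex I i j) ∈ Icc (g (I * (J + 1))) (g 0) :=
  ⟨hg (squareIndex_le hj), hg (Nat.zero_le _)⟩

/-- The grid whose inner cells are squares of sidelengths `g k`, `k < I * J`. -/
noncomputable def ofSquares (hg : Antitone g) (hpos : ∀ k, 0 ≤ g k)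
    (hI : I * g 0 ≤ B.1.length) (hJ : J * g 0 ≤ B.2.length) : PinwheelGrid I J B where
  x i j := stackCoord B.1.fst B.1.snd I (fun i' => g (squareIndex I i' j)) i
  y i j := stackCoord B.2.fst B.2.snd J (fun j' => g (squareIndex I i j')) j
  x_mono_left _ := monotone_stackCoord (fun _ _ => ⟨hpos _, hg (Nat.zero_le _)⟩) hI
  x_anti_right i _ _ hj :=
    stackCoord_le_stackCoord (fun _ => hg (by unfold squareIndex; gcongr)) i
  y_mono_left j _ _ hi :=
    stackCoord_le_stackCoord (fun _ => hg (by unfold squareIndex; gcongr)) j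
  y_mono_right _ := monotone_stackCoord (fun _ _ => ⟨hpos _, hg (Nat.zero_le _)⟩) hJ
  x_zero _ := stackCoord_zero
  x_last _ := stackCoord_of_lt I.lt_succ_self
  y_zero _ := stackCoord_zero
  y_last _ := stackCoord_of_lt J.lt_succ_self

section ofSquares

variable (hg : Antitone g) (hpos : ∀ k, 0 ≤ g k) (hI : I * g 0 ≤ B.1.length)
  (hJ : J * g 0 ≤ B.2.length)

lemma isSquare_cell_ofSquares {k : ℕ} (hk : k < I * J) :
    ((ofSquares hg hpos hI hJ).cell (innerIndex I k)).IsSquare (g k) := by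
  obtain ⟨hi, hj⟩ := innerIndex_mem hk
  have hk : g (squareIndex I (innerIndex I k).1 (innerIndex I k).2) = g k := by
    rw [squareIndex_innerIndex (by omega)]
  exact ⟨(stackCoord_succ_sub hi).trans hk, (stackCoord_succ_sub hj).trans hk⟩

lemma height_gap_ofSquares_le {e : ℝ} (heI : I * (g 0 - g (I * (J + 1))) ≤ e)
    (heJ : J * (g 0 - g (I * (J + 1))) ≤ e) {q : ℕ × ℕ} (hq : q ∈ gridIndices I J) :
    ((ofSquares hg hpos hI hJ).gap q).height ≤ e := by
  obtain ⟨hi, hj⟩ : q.1 < I ∧ q.2 < J := by simpa using hq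
  have hρ : g (I * (J + 1)) ≤ g 0 := hg (Nat.zero_le _)
  exact max_le
    ((stackCoord_sub_le (fun _ _ => apply_squareIndex_mem_Icc hg hj.le)
      (fun _ _ => apply_squareIndex_mem_Icc hg hj) hρ hi).trans heI)
    ((stackCoord_sub_le (fun _ hj' => apply_squareIndex_mem_Icc hg hj'.le)
      (fun _ hj' => apply_squareIndex_mem_Icc hg hj'.le) hρ hj).trans heJ)

lemma height_cell_ofSquares_le (heI : I * (g 0 - g (I * (J + 1))) ≤ g 0)
    (heJ : J * (g 0 - g (I * (J + 1))) ≤ g 0) (hI' : B.1.length ≤ (I + 1) * g 0)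
    (hJ' : B.2.length ≤ (J + 1) * g 0) {q : ℕ × ℕ} (hq : q ∈ gridIndices (I + 1) (J + 1)) :
    ((ofSquares hg hpos hI hJ).cell q).height ≤ 2 * g 0 := by
  obtain ⟨hi, hj⟩ : q.1 < I + 1 ∧ q.2 < J + 1 := by simpa using hq
  exact max_le
    (stackCoord_succ_sub_le (fun _ _ => apply_squareIndex_mem_Icc hg (Nat.le_of_lt_succ hj))
      (hpos 0) hI' heI (Nat.le_of_lt_succ hi))
    (stackCoord_succ_sub_le (fun _ hj' => apply_squareIndex_mem_Icc hg hj'.le)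
      (hpos 0) hJ' heJ (Nat.le_of_lt_succ hj))

end ofSquares

end PinwheelGrid

theorem exists_isBlockPacking {g : ℕ → ℝ} (hg : Antitone g) (hpos : ∀ k, 0 ≤ g k) {I J : ℕ}
    {B : Box} (hI : B.1.length ∈ Icc (I * g 0) ((I + 1) * g 0))
    (hJ : B.2.length ∈ Icc (J * g 0) ((J + 1) * g 0)) {δ e : ℝ} (hδ : 0 ≤ δ) (he : e ≤ g 0)
    (heI : I * (g 0 - g (I * (J + 1))) ≤ e) (heJ : J * (g 0 - g (I * (J + 1))) ≤ e) :
    ∃ Q W, IsBlockPacking g (I * J) B Q W ∧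
      Box.totalPerim δ W ≤ (I + J + 1) * (2 * g 0) ^ (1 + δ) + I * J * e ^ (1 + δ) := by
  let G : PinwheelGrid I J B := .ofSquares hg hpos hI.1 hJ.1
  exact ⟨_, _, G.isBlockPacking fun _ => PinwheelGrid.isSquare_cell_ofSquares hg hpos hI.1 hJ.1,
    G.totalPerim_waste_le hδ
      (fun _ => PinwheelGrid.height_cell_ofSquares_le hg hpos hI.1 hJ.1 (heI.trans he)
        (heJ.trans he) hI.2 hJ.2)
      fun _ => PinwheelGrid.height_gap_ofSquares_le hg hpos hI.1 hJ.1 heI heJ⟩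

/-! ### The greedy packing -/

/-- Squares of sidelengths `s k`, `n ≤ k < nmax`, can be packed into the boxes of `L`, each square
into a single box. -/
def Packs (s : ℕ → ℝ) (n nmax : ℕ) (L : List Box) : Prop :=
  ∃ Q : ℕ → Box, (∀ k ∈ Ico n nmax, (Q k).IsSquare (s k)) ∧
    (∀ k ∈ Ico n nmax, ∃ R ∈ L, Q k ≤ R) ∧
    ∀ k ∈ Ico n nmax, ∀ k' ∈ Ico n nmax, k < k' → (Q k).Apart (Q k')

section Packs

variable {s : ℕ → ℝ} {n N nmax : ℕ} {A₁ A₂ B : Box} {L L' W : List Box}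

lemma packs_of_le (h : nmax ≤ n) : Packs s n nmax L := by
  simp [Packs, Ico_eq_empty h.not_gt]

lemma Packs.mono (h : Packs s n nmax L) (hL : ∀ R ∈ L, ∃ R' ∈ L', R ≤ R') :
    Packs s n nmax L' := by
  obtain ⟨Q, hsquare, hle, hapart⟩ := h
  refine ⟨Q, hsquare, fun k hk => ?_, hapart⟩
  obtain ⟨R, hR, hQR⟩ := hle k hk
  obtain ⟨R', hR', hRR'⟩ := hL R hR
  exact ⟨R', hR', hQR.trans hRR'⟩

lemma Packs.perm (h : Packs s n nmax L) (hL : L.Perm L') : Packs s n nmax L' :=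
  h.mono fun R hR => ⟨R, hL.mem_iff.1 hR, le_rfl⟩

lemma Packs.of_cut (h : Packs s n nmax (A₁ :: A₂ :: L)) (h₁ : A₁ ≤ B) (h₂ : A₂ ≤ B) :
    Packs s n nmax (B :: L) := by
  refine h.mono fun R hR => ?_
  rcases List.mem_cons.1 hR with rfl | hR
  · exact ⟨B, List.mem_cons_self, h₁⟩
  rcases List.mem_cons.1 hR with rfl | hR
  exacts [⟨B, List.mem_cons_self, h₂⟩, ⟨R, List.mem_cons_of_mem _ hR, le_rfl⟩]

lemma IsBlockPacking.packs {Q : ℕ → Box} (h : IsBlockPacking (fun k => s (n + k)) N B Q W)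
    (hL : ∀ R ∈ L, B.Apart R) (hrest : Packs s (n + N) nmax (W ++ L)) :
    Packs s n nmax (B :: L) := by
  obtain ⟨Q', hsquare', hle', hapart'⟩ := hrest
  have hcross : ∀ k < N, ∀ k' ∈ Ico (n + N) nmax, (Q k).Apart (Q' k') := by
    intro k hk k' hk'
    obtain ⟨R, hR, hQR⟩ := hle' k' hk'
    rcases List.mem_append.1 hR with hR | hR
    · exact (h.square_apart_waste k hk R hR).mono le_rfl hQR
    · exact (hL R hR).mono (h.square_le k hk) hQR
  refine ⟨fun k => if k < n + N then Q (k - n) else Q' k, fun k hk => ?_, fun k hk => ?_,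
    fun k hk k' hk' hkk' => ?_⟩ <;> beta_reduce
  · split_ifs with hkN
    · simpa [hk.1] using h.isSquare (k - n) (by grind)
    · exact hsquare' k ⟨not_lt.1 hkN, hk.2⟩
  · split_ifs with hkN
    · exact ⟨B, List.mem_cons_self, h.square_le _ (by grind)⟩
    · obtain ⟨R, hR, hQR⟩ := hle' k ⟨not_lt.1 hkN, hk.2⟩
      rcases List.mem_append.1 hR with hR | hR
      · exact ⟨B, List.mem_cons_self, hQR.trans (h.waste_le R hR)⟩
      · exact ⟨R, List.mem_cons_of_mem _ hR, hQR⟩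
  · split_ifs with hkN hkN' hkN'
    · exact h.square_apart _ (by grind) _ (by grind) (by grind)
    · exact hcross _ (by grind) k' ⟨not_lt.1 hkN', hk'.2⟩
    · exact absurd (hkk'.trans hkN') hkN
    · exact hapart' k ⟨not_lt.1 hkN, hk.2⟩ k' ⟨not_lt.1 hkN', hk'.2⟩ hkk'

end Packs

/-- Families of pairwise non-overlapping boxes of width at most one. -/
def Admissible (L : List Box) : Prop := (∀ R ∈ L, R.width ≤ 1) ∧ L.Pairwise Box.Apart

namespace Admissible

variable {A₁ A₂ B : Box} {W L L' : List Box}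

lemma refine (h : Admissible (B :: L)) (hWB : ∀ R ∈ W, R ≤ B) (hW : W.Pairwise Box.Apart) :
    Admissible (W ++ L) := by
  obtain ⟨hwidth, hapart⟩ := h
  rw [List.forall_mem_cons] at hwidth
  rw [List.pairwise_cons] at hapart
  exact ⟨List.forall_mem_append.2
      ⟨fun R hR => (Box.width_mono (hWB R hR)).trans hwidth.1, hwidth.2⟩,
    List.pairwise_append.2
      ⟨hW, hapart.2, fun R hR R' hR' => (hapart.1 R' hR').mono (hWB R hR) le_rfl⟩⟩

lemma cut (h : Admissible (B :: L)) (h₁ : A₁ ≤ B) (h₂ : A₂ ≤ B) (h₁₂ : A₁.Apart A₂) :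
    Admissible (A₁ :: A₂ :: L) :=
  h.refine (W := [A₁, A₂]) (by simp [h₁, h₂]) (by simpa using h₁₂)

lemma perm (h : Admissible L) (hL : L.Perm L') : Admissible L' :=
  ⟨fun R hR => h.1 R (hL.mem_iff.2 hR), (hL.pairwise_iff Box.Apart.symm).1 h.2⟩

end Admissible

/-- Sidelengths `s` with the area `T n` and the perimeter budget `P n` available from index `n` on.
The constant `9 * M ^ 2` bounds the number of squares that are compared in one block, `slow` and
`strip` say how little `s` varies over a block and over a strip of area `M * s m`, and `budget`
and `wide` say that the budget pays for the waste of the blocks and yet forces a box of width at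
least `M * s n`. -/
structure IsPackingSchedule (δ : ℝ) (M N₀ : ℕ) (s T P : ℕ → ℝ) : Prop where
  delta_mem : δ ∈ Icc 0 1
  one_le : 1 ≤ M
  pos : ∀ n, N₀ ≤ n → 0 < s n
  anti : ∀ m n, N₀ ≤ m → m ≤ n → s n ≤ s m
  slow : ∀ n, N₀ ≤ n → s n - s (n + 9 * M ^ 2) ≤ s n / (528 * M ^ 2)
  strip : ∀ m n, N₀ ≤ m → m ≤ n → (n - m) * s m ≤ 2 * M → 3 / 4 * s m ≤ s n
  area : ∀ n, N₀ ≤ n → T n = s n ^ 2 + T (n + 1)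
  budget : ∀ n, N₀ ≤ n → P n + 50 / M * s n ^ (1 + δ) ≤ P (n + 1)
  wide : ∀ n, N₀ ≤ n → P n * (M * s n) ^ (1 - δ) < T n

lemma exists_nat_mem_Icc_mul {r d : ℝ} {M : ℕ} (hr : 0 < r) (hd : d ∈ Icc (M * r) (2 * M * r)) :
    ∃ I : ℕ, M ≤ I ∧ I ≤ 2 * M ∧ d ∈ Icc (I * r) ((I + 1) * r) := by
  have hd₀ : 0 ≤ d := hd.1.trans' (by positivity)
  refine ⟨⌊d / r⌋₊, Nat.le_floor ((le_div_iff₀ hr).2 hd.1),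
    Nat.floor_le_of_le ((div_le_iff₀ hr).2 (by exact_mod_cast hd.2)), ?_, ?_⟩
  · exact (le_div_iff₀ hr).1 (Nat.floor_le (by positivity))
  · exact (div_le_iff₀ hr).1 (Nat.lt_floor_add_one _).le

lemma block_waste_le_budget {δ r : ℝ} {M I J : ℕ} (hδ : δ ∈ Icc 0 1) (hM : 1 ≤ M) (hI : M ≤ I)
    (hJ : M ≤ J) (hr : 0 ≤ r) :
    (I + J + 1) * (2 * r) ^ (1 + δ) + I * J * (r / (264 * M)) ^ (1 + δ) ≤
      (I * J : ℕ) * (50 / M * (99 / 100 * r) ^ (1 + δ)) := by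
  obtain ⟨hδ₀, hδ₁⟩ := hδ
  have hM' : (1 : ℝ) ≤ M := mod_cast hM
  have hI' : (M : ℝ) ≤ I := mod_cast hI
  have hJ' : (M : ℝ) ≤ J := mod_cast hJ
  have hcount : (I : ℝ) + J + 1 ≤ 3 * (I * J / M) := by
    rw [← mul_div_assoc, le_div_iff₀ (by positivity)]
    nlinarith
  have htwo : (2 : ℝ) ^ (1 + δ) ≤ 4 := by
    calc (2 : ℝ) ^ (1 + δ) ≤ 2 ^ (2 : ℝ) := by gcongr <;> linarith
      _ = 4 := by norm_num
  have hsmall : (1 / (264 * M) : ℝ) ^ (1 + δ) ≤ 1 / M :=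
    calc (1 / (264 * M) : ℝ) ^ (1 + δ) ≤ 1 / (264 * M) :=
          Real.rpow_le_self_of_le_one (by positivity)
            ((div_le_one (by positivity)).2 (by linarith)) (by linarith)
      _ ≤ 1 / M := by gcongr; linarith
  have hlarge : 9 / 10 ≤ (99 / 100 : ℝ) ^ (1 + δ) :=
    calc (9 / 10 : ℝ) ≤ (99 / 100) ^ (2 : ℝ) := by norm_num
      _ ≤ (99 / 100) ^ (1 + δ) :=
          Real.rpow_le_rpow_of_exponent_ge (by norm_num) (by norm_num) (by linarith)
  rw [div_eq_mul_one_div r, mul_comm r, Real.mul_rpow (by positivity) hr,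
    Real.mul_rpow (by positivity) hr, Real.mul_rpow (by positivity) hr]
  calc (I + J + 1) * ((2 : ℝ) ^ (1 + δ) * r ^ (1 + δ)) +
        I * J * ((1 / (264 * M) : ℝ) ^ (1 + δ) * r ^ (1 + δ))
      ≤ 3 * (I * J / M) * (4 * r ^ (1 + δ)) + I * J * (1 / M * r ^ (1 + δ)) := by gcongr
    _ = 13 * (I * J / M * r ^ (1 + δ)) := by ring
    _ ≤ 45 * (I * J / M * r ^ (1 + δ)) := by gcongr; norm_num
    _ = I * J * (50 / M * (9 / 10 * r ^ (1 + δ))) := by ring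
    _ ≤ (I * J : ℕ) * (50 / M * ((99 / 100) ^ (1 + δ) * r ^ (1 + δ))) := by push_cast; gcongr

namespace IsPackingSchedule

variable {δ : ℝ} {M N₀ : ℕ} {s T P : ℕ → ℝ}

lemma sum_sq (h : IsPackingSchedule δ M N₀ s T P) {n : ℕ} (hn : N₀ ≤ n) (N : ℕ) :
    ∑ k ∈ Finset.range N, s (n + k) ^ 2 = T n - T (n + N) := by
  induction N with
  | zero => simp
  | succ N ih =>
    rw [Finset.sum_range_succ, ih, h.area (n + N) (by omega), ← add_assoc]
    ring

lemma sum_budget (h : IsPackingSchedule δ M N₀ s T P) {n : ℕ} (hn : N₀ ≤ n) (N : ℕ) :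
    ∑ k ∈ Finset.range N, 50 / M * s (n + k) ^ (1 + δ) ≤ P (n + N) - P n := by
  induction N with
  | zero => simp
  | succ N ih =>
    rw [Finset.sum_range_succ, ← add_assoc]
    linarith [h.budget (n + N) (by omega)]

lemma sub_le_of_le (h : IsPackingSchedule δ M N₀ s T P) {n k : ℕ} (hn : N₀ ≤ n)
    (hk : k ≤ 9 * M ^ 2) : s n - s (n + k) ≤ s n / (528 * M ^ 2) := by
  linarith [h.slow n hn, h.anti (n + k) (n + 9 * M ^ 2) (by omega) (by omega)]

lemma le_of_le (h : IsPackingSchedule δ M N₀ s T P) {n k : ℕ} (hn : N₀ ≤ n)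
    (hk : k ≤ 9 * M ^ 2) : 99 / 100 * s n ≤ s (n + k) := by
  have hs := h.pos n hn
  have hM : (1 : ℝ) ≤ (M : ℝ) ^ 2 := one_le_pow₀ (mod_cast h.one_le)
  have hloss : s n / (528 * M ^ 2) ≤ s n / 100 := by gcongr; linarith
  linarith [h.sub_le_of_le hn hk]

theorem exists_block (h : IsPackingSchedule δ M N₀ s T P) {n : ℕ} (hn : N₀ ≤ n) {B : Box}
    (hwidth : M * s n ≤ B.width) (hheight : B.height ≤ 2 * M * s n) :
    ∃ N Q W, 0 < N ∧ N ≤ 4 * M ^ 2 ∧ IsBlockPacking (fun k => s (n + k)) N B Q W ∧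
      Box.totalPerim δ W ≤ P (n + N) - P n := by
  have hs := h.pos n hn
  have hM : (1 : ℝ) ≤ M := mod_cast h.one_le
  obtain ⟨I, hMI, hIM, hI⟩ := exists_nat_mem_Icc_mul hs
    ⟨hwidth.trans (min_le_left _ _), (le_max_left _ _).trans hheight⟩
  obtain ⟨J, hMJ, hJM, hJ⟩ := exists_nat_mem_Icc_mul hs
    ⟨hwidth.trans (min_le_right _ _), (le_max_right _ _).trans hheight⟩
  have hIJ : I * J ≤ 4 * M ^ 2 := (Nat.mul_le_mul hIM hJM).trans_eq (by ring)
  have hlast : I * (J + 1) ≤ 9 * M ^ 2 := by nlinarith [h.one_le]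
  have hloss : ∀ c : ℕ, c ≤ 2 * M → c * (s n - s (n + I * (J + 1))) ≤ s n / (264 * M) :=
    fun c hc => calc
      c * (s n - s (n + I * (J + 1))) ≤ (2 * M) * (s n / (528 * M ^ 2)) :=
        mul_le_mul (mod_cast hc) (h.sub_le_of_le hn hlast)
          (sub_nonneg.2 (h.anti n _ hn (by omega))) (by positivity)
      _ = s n / (264 * M) := by field_simp; norm_num
  obtain ⟨Q, W, hQW, hperim⟩ := exists_isBlockPacking (g := fun k => s (n + k)) (δ := δ)
    (fun i j hij => h.anti _ _ (by omega) (by omega)) (fun k => (h.pos _ (by omega)).le) hI hJ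
    h.delta_mem.1 (div_le_self hs.le (by linarith)) (hloss I hIM) (hloss J hJM)
  refine ⟨I * J, Q, W, Nat.mul_pos (h.one_le.trans hMI) (h.one_le.trans hMJ), hIJ, hQW, ?_⟩
  calc Box.totalPerim δ W
      ≤ (I + J + 1) * (2 * s n) ^ (1 + δ) + I * J * (s n / (264 * M)) ^ (1 + δ) := hperim
    _ ≤ (I * J : ℕ) * (50 / M * (99 / 100 * s n) ^ (1 + δ)) :=
        block_waste_le_budget h.delta_mem h.one_le hMI hMJ hs.le
    _ = ∑ k ∈ Finset.range (I * J), 50 / M * (99 / 100 * s n) ^ (1 + δ) := by simp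
    _ ≤ ∑ k ∈ Finset.range (I * J), 50 / M * s (n + k) ^ (1 + δ) := by
        have hδ := h.delta_mem.1
        gcongr with k hk
        exact h.le_of_le hn (by have := Finset.mem_range.1 hk; omega)
    _ ≤ P (n + I * J) - P n := h.sum_budget hn _

-- If `s` had dropped below `3 / 4 * s m`, more than `2 * M / s m` squares would have been packed.
lemma le_of_area_le (h : IsPackingSchedule δ M N₀ s T P) {m n k : ℕ} (hm : N₀ ≤ m)
    (hmn : m ≤ n) (hk : k ≤ 9 * M ^ 2) (hlow : 3 / 4 * s m ≤ s n)
    (harea : T m - T (n + k) ≤ M * s m) : 3 / 4 * s m ≤ s (n + k) := by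
  have hs := h.pos m hm
  have hrough : 74 / 100 * s m ≤ s (n + k) := by
    linarith [h.le_of_le (hm.trans hmn) hk]
  refine h.strip m (n + k) hm (by omega) ?_
  obtain ⟨d, hd⟩ := Nat.exists_eq_add_of_le (show m ≤ n + k by omega)
  rw [hd] at harea hrough ⊢
  have hsum : d * (74 / 100 * s m) ^ 2 ≤ M * s m := by
    calc d * (74 / 100 * s m) ^ 2 = ∑ i ∈ Finset.range d, (74 / 100 * s m) ^ 2 := by simp
      _ ≤ ∑ i ∈ Finset.range d, s (m + i) ^ 2 := by
          gcongr with i hi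
          have := Finset.mem_range.1 hi
          linarith [h.anti (m + i) (m + d) (by omega) (by omega)]
      _ = T m - T (m + d) := h.sum_sq hm d
      _ ≤ M * s m := harea
  have hcount : d * s m * (74 / 100) ^ 2 ≤ M := le_of_mul_le_mul_right (by linarith) hs
  push_cast
  nlinarith [mul_nonneg (Nat.cast_nonneg' d) hs.le]

end IsPackingSchedule

/-- A state of the packing before index `n`: the boxes of `L` have exactly the area of the squares
to come, and their weighted perimeter is within the budget. -/
structure Feasible (δ : ℝ) (T P : ℕ → ℝ) (n : ℕ) (L : List Box) : Prop where
  admissible : Admissible L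
  area_eq : Box.totalArea L = T n
  perim_le : Box.totalPerim δ L ≤ P n

/-- A state of the packing before index `n` in which the box `Box.orient o I J` is the unused end
of a strip of breadth `M * s m` opened at index `m`. The perimeter of the strip is not charged to
the budget. -/
structure FeasibleStrip (δ : ℝ) (M : ℕ) (s T P : ℕ → ℝ) (m n : ℕ) (o : Bool)
    (I J : NonemptyInterval ℝ) (L : List Box) : Prop where
  le : m ≤ n
  admissible : Admissible (Box.orient o I J :: L)
  breadth_eq : J.length = M * s m
  le_length : M * s n ≤ I.length
  slow : 3 / 4 * s m ≤ s n
  strip_area_le : T m - T n + I.length * J.length ≤ M * s m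
  area_eq : Box.totalArea (Box.orient o I J :: L) = T n
  perim_le : Box.totalPerim δ L ≤ P n

section Greedy

variable {δ : ℝ} {M N₀ : ℕ} {s T P : ℕ → ℝ} {m n : ℕ} {o : Bool} {I J : NonemptyInterval ℝ}
  {L : List Box}

-- If all boxes were narrower than `M * s n`, the perimeter budget would not leave enough area.
lemma Feasible.exists_le_width (hL : Feasible δ T P n L) (h : IsPackingSchedule δ M N₀ s T P)
    (hn : N₀ ≤ n) : ∃ R ∈ L, M * s n ≤ R.width := by
  by_contra! hnarrow
  have hs := h.pos n hn
  have harea := Box.totalArea_le_totalPerim_mul h.delta_mem.1 h.delta_mem.2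
    fun R hR => (hnarrow R hR).le
  have hperim : Box.totalPerim δ L * (M * s n) ^ (1 - δ) ≤ P n * (M * s n) ^ (1 - δ) :=
    mul_le_mul_of_nonneg_right hL.perim_le (by positivity)
  linarith [hL.area_eq, h.wide n hn]

lemma Feasible.exists_feasibleStrip (hL : Feasible δ T P n L)
    (h : IsPackingSchedule δ M N₀ s T P) (hn : N₀ ≤ n) :
    ∃ o I J L', FeasibleStrip δ M s T P n n o I J L' ∧
      ∀ nmax, Packs s n nmax (Box.orient o I J :: L') → Packs s n nmax L := by
  have hs := h.pos n hn
  obtain ⟨R, hR, hwidth⟩ := hL.exists_le_width h hn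
  obtain ⟨L₀, hperm⟩ : ∃ L₀, L.Perm (R :: L₀) := ⟨_, List.perm_cons_erase hR⟩
  have hadm := hL.admissible.perm hperm
  have hR₁ : R.width ≤ 1 := hadm.1 R List.mem_cons_self
  have harea := hL.area_eq
  have hperim := hL.perim_le
  rw [Box.totalArea_perm hperm, Box.totalArea_cons] at harea
  rw [Box.totalPerim_perm δ hperm, Box.totalPerim_cons] at hperim
  obtain ⟨o, I, J, rfl, hI, hJ⟩ := R.exists_orient_eq
  obtain ⟨J₁, hJ₁, J₂, hJ₂, hcut, hlength₁, hlength₂⟩ :=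
    exists_cut J (by positivity : 0 ≤ M * s n) (hwidth.trans hJ)
  have hle₁ : Box.orient o I J₁ ≤ Box.orient o I J := Box.orient_mono le_rfl hJ₁
  have hle₂ : Box.orient o I J₂ ≤ Box.orient o I J := Box.orient_mono le_rfl hJ₂
  refine ⟨o, I, J₁, Box.orient o I J₂ :: L₀, ⟨le_rfl, ?_, hlength₁, hI ▸ hwidth, by linarith, ?_,
    ?_, ?_⟩, fun nmax hrest => (hrest.of_cut hle₁ hle₂).perm hperm.symm⟩
  · exact hadm.cut hle₁ hle₂ (Box.orient_apart_right hcut)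
  · rw [hlength₁]
    nlinarith [mul_nonneg (Nat.cast_nonneg' M) hs.le]
  · rw [Box.area_orient] at harea
    rw [Box.totalArea_cons, Box.totalArea_cons, Box.area_orient, Box.area_orient, hlength₁,
      hlength₂]
    linarith
  · rw [Box.totalPerim_cons]
    linarith [Box.perimPow_mono h.delta_mem.1 hle₂]

namespace FeasibleStrip

lemma exists_block (hL : FeasibleStrip δ M s T P m n o I J L)
    (h : IsPackingSchedule δ M N₀ s T P) (hm : N₀ ≤ m) {I₁ : NonemptyInterval ℝ}
    (hI₁ : I₁.length ∈ Icc (M * s n) (2 * M * s n)) :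
    ∃ N Q W, 0 < N ∧ N ≤ 4 * M ^ 2 ∧
      IsBlockPacking (fun k => s (n + k)) N (Box.orient o I₁ J) Q W ∧
      Box.totalPerim δ W ≤ P (n + N) - P n ∧
      Box.totalArea W + (T n - T (n + N)) = I₁.length * J.length := by
  have hn := hm.trans hL.le
  have hJ : J.length ∈ Icc (M * s n) (2 * M * s n) := by
    rw [hL.breadth_eq, mul_comm 2, mul_assoc]
    exact ⟨by gcongr; exact h.anti _ _ hm hL.le, by gcongr; linarith [hL.slow, h.pos n hn]⟩
  obtain ⟨N, Q, W, hN, hNM, hQW, hperim⟩ := h.exists_block hn (B := Box.orient o I₁ J)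
    (by rw [Box.width_orient]; exact le_min hI₁.1 hJ.1)
    (by rw [Box.height_orient]; exact max_le hI₁.2 hJ.2)
  refine ⟨N, Q, W, hN, hNM, hQW, hperim, ?_⟩
  rw [← h.sum_sq hn, hQW.area_eq, Box.area_orient]

lemma exists_feasible (hL : FeasibleStrip δ M s T P m n o I J L)
    (h : IsPackingSchedule δ M N₀ s T P) (hm : N₀ ≤ m) (hI : I.length ≤ 2 * M * s n) :
    ∃ n' > n, ∃ L', Feasible δ T P n' L' ∧
      ∀ nmax, Packs s n' nmax L' → Packs s n nmax (Box.orient o I J :: L) := by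
  obtain ⟨N, Q, W, hN, -, hQW, hperim, harea⟩ := hL.exists_block h hm ⟨hL.le_length, hI⟩
  have hL_area := hL.area_eq
  rw [Box.totalArea_cons, Box.area_orient] at hL_area
  refine ⟨n + N, by omega, W ++ L, ⟨hL.admissible.refine hQW.waste_le hQW.waste_pairwise, ?_, ?_⟩,
    fun nmax => hQW.packs (List.pairwise_cons.1 hL.admissible.2).1⟩
  · rw [Box.totalArea_append]
    linarith
  · rw [Box.totalPerim_append]
    linarith [hL.perim_le]

lemma exists_feasibleStrip (hL : FeasibleStrip δ M s T P m n o I J L)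
    (h : IsPackingSchedule δ M N₀ s T P) (hm : N₀ ≤ m) (hI : 2 * M * s n < I.length) :
    ∃ n' > n, ∃ I' L', FeasibleStrip δ M s T P m n' o I' J L' ∧
      ∀ nmax, Packs s n' nmax (Box.orient o I' J :: L') →
        Packs s n nmax (Box.orient o I J :: L) := by
  have hn := hm.trans hL.le
  have hMs : 0 ≤ M * s n := mul_nonneg M.cast_nonneg (h.pos n hn).le
  obtain ⟨I₁, hI₁, I₂, hI₂, hcut, hlength₁, hlength₂⟩ := exists_cut I hMs hL.le_length
  obtain ⟨N, Q, W, hN, hNM, hQW, hperim, harea⟩ :=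
    hL.exists_block h hm (I₁ := I₁) ⟨hlength₁.ge, by linarith⟩
  have hle₁ : Box.orient o I₁ J ≤ Box.orient o I J := Box.orient_mono hI₁ le_rfl
  have hle₂ : Box.orient o I₂ J ≤ Box.orient o I J := Box.orient_mono hI₂ le_rfl
  have hadm : Admissible (Box.orient o I₁ J :: Box.orient o I₂ J :: L) :=
    hL.admissible.cut hle₁ hle₂ (Box.orient_apart_left hcut)
  have hsplit : I.length * J.length = I₁.length * J.length + I₂.length * J.length := by
    rw [hlength₁, hlength₂]
    ring
  have hW := Box.totalArea_nonneg W
  have hstrip := hL.strip_area_le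
  have hL_area := hL.area_eq
  rw [Box.totalArea_cons, Box.area_orient] at hL_area
  refine ⟨n + N, by omega, I₂, W ++ L, ⟨hL.le.trans (by omega),
      (hadm.refine hQW.waste_le hQW.waste_pairwise).perm List.perm_middle, hL.breadth_eq, ?_,
      h.le_of_area_le hm hL.le (by omega) hL.slow ?_, by linarith, ?_, ?_⟩,
    fun nmax hrest => (hQW.packs (List.pairwise_cons.1 hadm.2).1
      (hrest.perm List.perm_middle.symm)).of_cut hle₁ hle₂⟩
  · calc M * s (n + N) ≤ M * s n := by gcongr; exact h.anti _ _ hn (by omega)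
      _ ≤ I₂.length := by linarith
  · linarith [mul_nonneg I₂.length_nonneg J.length_nonneg]
  · rw [Box.totalArea_cons, Box.totalArea_append, Box.area_orient]
    linarith
  · rw [Box.totalPerim_append]
    linarith [hL.perim_le]

theorem packs {m n : ℕ} {o : Bool} {I J : NonemptyInterval ℝ} {L : List Box}
    (hL : FeasibleStrip δ M s T P m n o I J L) (h : IsPackingSchedule δ M N₀ s T P)
    (hm : N₀ ≤ m) (nmax : ℕ) : Packs s n nmax (Box.orient o I J :: L) := by
  rcases le_or_gt nmax n with hn | hn
  · exact packs_of_le hn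
  rcases le_or_gt I.length (2 * M * s n) with hI | hI
  · obtain ⟨n', hn', L', hL', hpacks⟩ := hL.exists_feasible h hm hI
    have hN₀ : N₀ ≤ n' := hm.trans (hL.le.trans hn'.le)
    obtain ⟨o', I', J', L'', hL'', hpacks'⟩ := hL'.exists_feasibleStrip h hN₀
    exact hpacks nmax (hpacks' nmax (hL''.packs h hN₀ nmax))
  · obtain ⟨n', hn', I', L', hL', hpacks⟩ := hL.exists_feasibleStrip h hm hI
    exact hpacks nmax (hL'.packs h hm nmax)
termination_by nmax - n
decreasing_by all_goals exact Nat.sub_lt_sub_left hn hn'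

end FeasibleStrip

theorem Feasible.packs (hL : Feasible δ T P n L) (h : IsPackingSchedule δ M N₀ s T P)
    (hn : N₀ ≤ n) (nmax : ℕ) : Packs s n nmax L := by
  obtain ⟨o, I, J, L', hL', hpacks⟩ := hL.exists_feasibleStrip h hn
  exact hpacks nmax (hL'.packs h hn nmax)

end Greedy

/-! ### Sidelengths from slowly growing functions -/

section RealAnalysis

lemma mul_rpow_neg_le_rpow_neg {t c A B : ℝ} (ht : t ∈ Icc 0 1) (hc : c ∈ Ioc 0 1) (hB : 0 < B)
    (h : c * B ≤ A) : c * A ^ (-t) ≤ B ^ (-t) := by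
  obtain ⟨hc₀, hc₁⟩ := hc
  calc c * A ^ (-t) ≤ c * (c * B) ^ (-t) := by
        gcongr ?_ * ?_
        exact Real.rpow_le_rpow_of_nonpos (by positivity) h (neg_nonpos.2 ht.1)
    _ = c ^ (1 - t) * B ^ (-t) := by
        rw [Real.mul_rpow hc₀.le hB.le, sub_eq_add_neg, Real.rpow_add hc₀, Real.rpow_one, mul_assoc]
    _ ≤ B ^ (-t) :=
        mul_le_of_le_one_left (by positivity)
          (Real.rpow_le_one hc₀.le hc₁ (sub_nonneg.2 ht.2))

lemma le_add_mul_of_derivWithin_le {f : ℝ → ℝ} {a u v C : ℝ} (hf : DifferentiableOn ℝ f (Ici a))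
    (hu : a ≤ u) (huv : u ≤ v) (hC : ∀ x ∈ Icc u v, derivWithin f (Ici a) x ≤ C) :
    f v ≤ f u + C * (v - u) := by
  have hnhds : ∀ x ∈ interior (Icc u v), Ici a ∈ nhds x := fun x hx =>
    Ici_mem_nhds (hu.trans_lt (interior_Icc.subset hx).1)
  have hmvt := (convex_Icc u v).image_sub_le_mul_sub_of_deriv_le
    (hf.continuousOn.mono fun x hx => hu.trans hx.1)
    (fun x hx => (hf.differentiableAt (hnhds x hx)).differentiableWithinAt)
    (fun x hx => (derivWithin_of_mem_nhds (hnhds x hx)).ge.trans (hC x (interior_subset hx)))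
    u (left_mem_Icc.2 huv) v (right_mem_Icc.2 huv) huv
  linarith

lemma rpow_neg_sub_rpow_neg_le {f : ℝ → ℝ} {t a u v ε : ℝ} (ht : t ∈ Icc 0 1)
    (hf : DifferentiableOn ℝ f (Ici a)) (hu : a ≤ u) (huv : u < v) (hfu : 0 < f u) (hfv : 0 < f v)
    (hε : ε ∈ Ico 0 1) (hderiv : ∀ x ∈ Icc u v, derivWithin f (Ici a) x ≤ ε * f u / (v - u)) :
    f u ^ (-t) - f v ^ (-t) ≤ ε * f u ^ (-t) := by
  have hgrowth := le_add_mul_of_derivWithin_le hf hu huv.le hderiv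
  rw [div_mul_cancel₀ _ (sub_pos.2 huv).ne'] at hgrowth
  have hratio : (1 - ε) * f v ≤ f u := by nlinarith [hε.1, hε.2, mul_nonneg hε.1 hfu.le]
  linarith [mul_rpow_neg_le_rpow_neg ht ⟨sub_pos.2 hε.2, sub_le_self 1 hε.1⟩ hfv hratio]

lemma summable_subtype_le_iff {g : ℕ → ℝ} (n : ℕ) :
    (Summable fun k : {k : ℕ // n ≤ k} => g k) ↔ Summable g := by
  rw [← (finite_Iio n).summable_compl_iff, compl_Iio]
  rfl

lemma sum_range_add_tsum_subtype_le {g : ℕ → ℝ} (hg : Summable g) (n : ℕ) :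
    ∑ k ∈ Finset.range n, g k + ∑' k : {k : ℕ // n ≤ k}, g k = ∑' k, g k := by
  rw [← hg.sum_add_tsum_compl (s := Finset.range n),
    tsum_congr_set_coe g (show (Finset.range n : Set ℕ)ᶜ = {k | n ≤ k} by ext; simp)]
  rfl

lemma tsum_subtype_le_eq_add {g : ℕ → ℝ} (hg : Summable g) (n : ℕ) :
    ∑' k : {k : ℕ // n ≤ k}, g k = g n + ∑' k : {k : ℕ // n + 1 ≤ k}, g k := by
  have hn := sum_range_add_tsum_subtype_le hg n
  have hn' := sum_range_add_tsum_subtype_le hg (n + 1)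
  rw [Finset.sum_range_succ] at hn'
  linarith

lemma mul_rpow_neg_le_of_sub_mul_le {f : ℝ → ℝ} {t K l M a u v : ℝ} (ht : t ∈ Icc 0 1)
    (hK : K ∈ Ioc 0 1) (hmono : MonotoneOn f (Ici a)) (hu : a ≤ u) (huv : u ≤ v) (hfu : 0 < f u)
    (hlength : M * f u ^ t ≤ l * u) (hgrowth : K * f ((1 + l) * u) ≤ f u)
    (h : (v - u) * f u ^ (-t) ≤ M) : K * f u ^ (-t) ≤ f v ^ (-t) := by
  have hv : v ≤ (1 + l) * u := by
    rw [Real.rpow_neg hfu.le, ← div_eq_mul_inv, div_le_iff₀ (by positivity)] at h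
    linarith
  have hfv : f v ≤ f ((1 + l) * u) := hmono (hu.trans huv) (hu.trans (huv.trans hv)) hv
  exact mul_rpow_neg_le_rpow_neg ht hK (hfu.trans_le (hmono hu (hu.trans huv) huv))
    ((mul_le_mul_of_nonneg_left hfv hK.1.le).trans hgrowth)

lemma fifty_le_rpow {t K M : ℝ} (ht : t ∈ Ioo 0 1) (hK : K ∈ Ioc 0 1)
    (hM : (50 / K ^ (t * (2 - t))) ^ (2 / (1 - t)) ≤ M) : 50 ≤ M ^ ((1 - t) / 2) := by
  have ht' : 0 < 1 - t := sub_pos.2 ht.2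
  have hK₀ : 0 < K ^ (t * (2 - t)) := Real.rpow_pos_of_pos hK.1 _
  have hK₁ : K ^ (t * (2 - t)) ≤ 1 :=
    Real.rpow_le_one hK.1.le hK.2 (mul_nonneg ht.1.le (by linarith))
  calc (50 : ℝ) ≤ 50 / K ^ (t * (2 - t)) := le_div_self (by norm_num) hK₀ hK₁
    _ ≤ M ^ (2 / (1 - t))⁻¹ :=
        (Real.le_rpow_inv_iff_of_pos (by positivity) (hM.trans' (by positivity))
          (by positivity)).2 hM
    _ = M ^ ((1 - t) / 2) := by rw [inv_div]

lemma lt_rpow_of_rpow_le {t C M : ℝ} (ht : t ∈ Ioo 0 1) (h50 : 50 ≤ M ^ ((1 - t) / 2))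
    (hM : (4 : ℝ) ^ (1 / (1 - t)) * C ^ (2 / (t * (1 - t))) ≤ M) : C < M ^ ((1 - t) / 2) := by
  have ht' : 0 < 1 - t := sub_pos.2 ht.2
  have ht₀ := ht.1
  rcases le_or_gt C 1 with hC | hC
  · linarith
  have hC₀ : 0 < C := by linarith
  have hsplit : (2 * C) ^ (2 / (1 - t)) ≤ M := by
    refine le_trans ?_ hM
    rw [Real.mul_rpow (by norm_num) hC₀.le, show (4 : ℝ) = 2 ^ (2 : ℝ) by norm_num,
      ← Real.rpow_mul (by norm_num), mul_one_div]
    gcongr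
    · exact hC.le
    · exact mul_le_of_le_one_left ht'.le ht.2.le
  calc C < 2 * C := by linarith
    _ ≤ M ^ (2 / (1 - t))⁻¹ :=
        (Real.le_rpow_inv_iff_of_pos (by positivity) (hM.trans' (by positivity)) (by positivity)).2
          hsplit
    _ = M ^ ((1 - t) / 2) := by rw [inv_div]

lemma le_div_mul_rpow_mul {t A S T ν lam c d k : ℝ} (hA : 0 < A) (hc : 0 ≤ c) (hd : 0 < d)
    (hk : 0 < k) (hS : S ≤ c * ν / A ^ (t + (1 - t) * t)) (hT : d * lam / A ^ (2 * t) ≤ T)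
    (hlam : k * ν ≤ lam) : S ≤ c / (k * d) * A ^ (t * t) * T := by
  have hexp : A ^ (2 * t) = A ^ (t + (1 - t) * t) * A ^ (t * t) := by
    rw [← Real.rpow_add hA]
    ring_nf
  have hx : 0 < A ^ (t * t) := by positivity
  calc S ≤ c * ν / A ^ (t + (1 - t) * t) := hS
    _ = c / (k * d) * A ^ (t * t) * (d * (k * ν) / A ^ (2 * t)) := by
        rw [hexp]
        generalize A ^ (t * t) = x at hx
        field_simp
    _ ≤ c / (k * d) * A ^ (t * t) * (d * lam / A ^ (2 * t)) := by gcongr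
    _ ≤ c / (k * d) * A ^ (t * t) * T := by gcongr

lemma add_div_mul_rpow_le {t A S C M : ℝ} (hM : 0 < M) (hA : 0 < A)
    (hC : C ≤ M ^ ((1 - t) / 2)) :
    M ^ (-1 + (1 - t) / 2) * S + C / M * (A ^ (-t)) ^ (1 + (1 - t)) ≤
      M ^ (-1 + (1 - t) / 2) * (S + A ^ (-(t + (1 - t) * t))) := by
  have hA_rpow : (A ^ (-t)) ^ (1 + (1 - t)) = A ^ (-(t + (1 - t) * t)) := by
    rw [← Real.rpow_mul hA.le]
    ring_nf
  have hM_rpow : M ^ (-1 + (1 - t) / 2) = M ^ ((1 - t) / 2) / M := by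
    rw [Real.rpow_add hM, Real.rpow_neg_one, inv_mul_eq_div]
  rw [hA_rpow, hM_rpow, mul_add]
  gcongr

lemma budget_mul_rpow_lt {t A S T C M : ℝ} (hM : 0 < M) (hA : 0 < A) (hT : 0 < T)
    (hS : S ≤ C * A ^ (t * t) * T) (hC : C < M ^ ((1 - t) / 2)) :
    M ^ (-1 + (1 - t) / 2) * S * (M * A ^ (-t)) ^ (1 - (1 - t)) < T := by
  have hM_rpow : M ^ (-1 + (1 - t) / 2) * M ^ t = (M ^ ((1 - t) / 2))⁻¹ := by
    rw [← Real.rpow_add hM, ← Real.rpow_neg hM.le]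
    ring_nf
  have hA_rpow : A ^ (t * t) * (A ^ (-t)) ^ t = 1 := by
    rw [← Real.rpow_mul hA.le, ← Real.rpow_add hA, neg_mul, add_neg_cancel, Real.rpow_zero]
  rw [sub_sub_cancel, Real.mul_rpow hM.le (by positivity)]
  calc M ^ (-1 + (1 - t) / 2) * S * (M ^ t * (A ^ (-t)) ^ t)
      ≤ M ^ (-1 + (1 - t) / 2) * (C * A ^ (t * t) * T) * (M ^ t * (A ^ (-t)) ^ t) := by gcongr
    _ = (M ^ (-1 + (1 - t) / 2) * M ^ t) * (A ^ (t * t) * (A ^ (-t)) ^ t) * C * T := by ring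
    _ = (M ^ ((1 - t) / 2))⁻¹ * C * T := by rw [hM_rpow, hA_rpow, mul_one]
    _ < T := by
        refine mul_lt_of_lt_one_left hT ?_
        rwa [inv_mul_lt_iff₀ (by positivity), mul_one]

end RealAnalysis

theorem isPackingSchedule_rpow_neg {t l K C : ℝ} {M N₀ : ℕ} {f : ℝ → ℝ} (ht : t ∈ Ioo 0 1)
    (hK : K ∈ Icc (3 / 4) 1) (hM : 1 ≤ M) (hN₀ : 1 ≤ N₀) (hdiff : DifferentiableOn ℝ f (Ici 1))
    (hmono : MonotoneOn f (Ici 1)) (hpos : ∀ x, 1 ≤ x → 0 < f x)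
    (hsum : Summable fun n : ℕ => f n ^ (-(2 * t)))
    (hgrowth : ∀ n : ℕ, N₀ ≤ n → K * f ((1 + l) * n) ≤ f n)
    (hlength : ∀ n : ℕ, N₀ ≤ n → 2 * M * f n ^ t ≤ l * n)
    (hderiv : ∀ n : ℕ, N₀ ≤ n → ∀ x ∈ Icc (n : ℝ) (n + 9 * (M : ℝ) ^ 2),
      derivWithin f (Ici 1) x ≤ 1 / 4752 * ((M : ℝ) ^ 4)⁻¹ * f n)
    (hratio : ∀ n : ℕ, N₀ ≤ n → ∑ k ∈ Finset.Icc 1 (n - 1), f k ^ (-(t + (1 - t) * t)) ≤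
      C * f n ^ (t * t) * ∑' k : {k : ℕ // n ≤ k}, f k ^ (-(2 * t)))
    (h50 : 50 ≤ (M : ℝ) ^ ((1 - t) / 2)) (hC : C < (M : ℝ) ^ ((1 - t) / 2)) :
    IsPackingSchedule (1 - t) M N₀ (fun n => f n ^ (-t))
      (fun n => ∑' k : {k : ℕ // n ≤ k}, f k ^ (-(2 * t)))
      (fun n => (M : ℝ) ^ (-1 + (1 - t) / 2) *
        ∑ k ∈ Finset.Icc 1 (n - 1), f k ^ (-(t + (1 - t) * t))) := by
  have ht' : t ∈ Icc 0 1 := Ioo_subset_Icc_self ht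
  have hM₁ : (1 : ℝ) ≤ M := Nat.one_le_cast.2 hM
  have hone : ∀ {n : ℕ}, N₀ ≤ n → (1 : ℝ) ≤ n := fun hn => Nat.one_le_cast.2 (hN₀.trans hn)
  have hfpos : ∀ {n : ℕ}, N₀ ≤ n → 0 < f n := fun hn => hpos _ (hone hn)
  have harea : ∀ n : ℕ, N₀ ≤ n → ∑' k : {k : ℕ // n ≤ k}, f k ^ (-(2 * t)) =
      (f n ^ (-t)) ^ 2 + ∑' k : {k : ℕ // n + 1 ≤ k}, f k ^ (-(2 * t)) := fun n hn => by
    rw [tsum_subtype_le_eq_add hsum n, ← Real.rpow_mul_natCast (hfpos hn).le]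
    ring_nf
  refine ⟨⟨sub_nonneg.2 ht.2.le, sub_le_self 1 ht.1.le⟩, hM, fun n hn => ?_, fun m n hm hmn => ?_,
    fun n hn => ?_, fun m n hm hmn hle => ?_, harea, fun n hn => ?_, fun n hn => ?_⟩
  · exact Real.rpow_pos_of_pos (hfpos hn) _
  · exact Real.rpow_le_rpow_of_nonpos (hfpos hm)
      (hmono (hone hm) (hone (hm.trans hmn)) (Nat.cast_le.2 hmn)) (neg_nonpos.2 ht.1.le)
  · have hM₂ : (1 : ℝ) ≤ (M : ℝ) ^ 2 := one_le_pow₀ hM₁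
    have hloss := rpow_neg_sub_rpow_neg_le (v := n + 9 * (M : ℝ) ^ 2) (ε := 1 / (528 * M ^ 2)) ht'
      hdiff (hone hn) (by linarith) (hfpos hn) (hpos _ (by linarith [hone hn]))
      ⟨by positivity, (div_lt_one (by positivity)).2 (by linarith)⟩ fun x hx =>
        (hderiv n hn x hx).trans_eq (by field_simp; ring)
    rw [one_div_mul_eq_div] at hloss
    exact_mod_cast hloss
  · exact (mul_le_mul_of_nonneg_right hK.1 (Real.rpow_nonneg (hfpos hm).le _)).trans
      (mul_rpow_neg_le_of_sub_mul_le ht' ⟨by linarith [hK.1], hK.2⟩ hmono (hone hm)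
        (Nat.cast_le.2 hmn) (hfpos hm) (hlength m hm) (hgrowth m hm) hle)
  · obtain ⟨j, rfl⟩ := Nat.exists_eq_add_of_le' (hN₀.trans hn)
    rw [Nat.add_sub_cancel, Nat.add_sub_cancel, Finset.sum_Icc_succ_top (Nat.le_add_left 1 j)]
    exact add_div_mul_rpow_le (by positivity) (hfpos hn) h50
  · refine budget_mul_rpow_lt (by positivity) (hfpos hn) ?_ (hratio n hn) hC
    have hs : 0 < f n ^ (-t) := Real.rpow_pos_of_pos (hfpos hn) _
    have htail : 0 ≤ ∑' k : {k : ℕ // n + 1 ≤ k}, f k ^ (-(2 * t)) := tsum_nonneg fun k =>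
      Real.rpow_nonneg (hfpos (hn.trans (n.le_succ.trans k.2))).le _
    rw [harea n hn]
    positivity

section Squares

variable {s : ℕ → ℝ} {n nmax : ℕ}

lemma Packs.exists_squares {L : List Box} {Ω : Set (ℝ × ℝ)} (h : Packs s n nmax L)
    (hL : ∀ R ∈ L, R.carrier ⊆ Ω) :
    ∃ pos : ℕ → ℝ × ℝ, (∀ k ∈ Ico n nmax, square (pos k) (s k) ⊆ Ω) ∧
      (Ico n nmax).Pairwise fun k k' =>
        Disjoint (interior (square (pos k) (s k))) (interior (square (pos k') (s k'))) := by
  obtain ⟨Q, hsquare, hle, hapart⟩ := h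
  have hcarrier : ∀ k ∈ Ico n nmax, square ((Q k).1.fst, (Q k).2.fst) (s k) = (Q k).carrier :=
    fun k hk => (hsquare k hk).square_eq_carrier
  refine ⟨fun k => ((Q k).1.fst, (Q k).2.fst), fun k hk => ?_, fun k hk k' hk' hne => ?_⟩ <;>
    beta_reduce
  · obtain ⟨R, hR, hQR⟩ := hle k hk
    exact (hcarrier k hk).trans_subset ((Box.carrier_subset_carrier hQR).trans (hL R hR))
  · rw [hcarrier k hk, hcarrier k' hk']
    rcases hne.lt_or_gt with hlt | hlt
    exacts [hapart k hk k' hk' hlt, (hapart k' hk' k hk hlt).symm]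

theorem IsPackingSchedule.exists_squares {δ : ℝ} {M N₀ : ℕ} {T P : ℕ → ℝ}
    (h : IsPackingSchedule δ M N₀ s T P) (hn : N₀ ≤ n) (nmax : ℕ) {ι : Type*} [Fintype ι]
    {p : ι → ℝ × ℝ} {a b : ι → ℝ} (hab : ∀ i, 0 ≤ a i ∧ 0 ≤ b i)
    (hdisj : Pairwise fun i j => Disjoint (interior (rectangle (p i) (a i) (b i)))
      (interior (rectangle (p j) (a j) (b j))))
    (hwidth : ∀ i, min (a i) (b i) ≤ 1) (harea : ∑ i, a i * b i = T n)
    (hperim : ∑ i, min (a i) (b i) ^ δ * max (a i) (b i) ≤ P n) :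
    ∃ pos : ℕ → ℝ × ℝ,
      (∀ k ∈ Ico n nmax, square (pos k) (s k) ⊆ ⋃ i, rectangle (p i) (a i) (b i)) ∧
      (Ico n nmax).Pairwise fun k k' =>
        Disjoint (interior (square (pos k) (s k))) (interior (square (pos k') (s k'))) := by
  let R : ι → Box := fun i => Box.ofRectangle (p i) (hab i).1 (hab i).2
  have hL : Feasible δ T P n (Finset.univ.toList.map R) := by
    refine ⟨⟨?_, ?_⟩, ?_, ?_⟩
    · simpa [R, Box.width] using hwidth
    · rw [List.pairwise_map]
      exact (Finset.nodup_toList _).imp fun hij => hdisj hij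
    · simpa [Box.totalArea, Function.comp_def, R, Box.area] using harea
    · simpa [Box.totalPerim, Function.comp_def, R, Box.perimPow, Box.width, Box.height]
        using hperim
  refine (hL.packs h hn nmax).exists_squares fun B hB => ?_
  obtain ⟨i, -, rfl⟩ := List.mem_map.1 hB
  exact subset_iUnion (fun i => rectangle (p i) (a i) (b i)) i

end Squares

theorem packing_into_a_family_of_rectangles_general {t l K C : ℝ} {M N₀ n : ℕ} {f : ℝ → ℝ}
    (ht : t ∈ Ioo 0 1) (hK : 3 / 4 ≤ K) (hN₀ : 1 ≤ N₀) (hn : N₀ ≤ n) (nmax : ℕ)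
    (hdiff : DifferentiableOn ℝ f (Ici 1)) (hmono : MonotoneOn f (Ici 1))
    (hpos : ∀ x, 1 ≤ x → 0 < f x) (hsum : Summable fun k : ℕ => f k ^ (-(2 * t)))
    (hgrowth : ∀ n : ℕ, N₀ ≤ n → K * f ((1 + l) * n) ≤ f n)
    (hratio : ∀ n : ℕ, N₀ ≤ n → ∑ k ∈ Finset.Icc 1 (n - 1), f k ^ (-(t + (1 - t) * t)) ≤
      C * f n ^ (t * t) * ∑' k : {k : ℕ // n ≤ k}, f k ^ (-(2 * t)))
    (hM : max ((4 : ℝ) ^ (1 / (1 - t)) * C ^ (2 / (t * (1 - t))))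
      ((50 / K ^ (t * (2 - t))) ^ (2 / (1 - t))) ≤ M)
    (hderiv : ∀ n : ℕ, N₀ ≤ n → ∀ x ∈ Icc (n : ℝ) (n + 9 * (M : ℝ) ^ 2),
      derivWithin f (Ici 1) x ≤ 1 / 4752 * ((M : ℝ) ^ 4)⁻¹ * f n)
    (hlength : ∀ n : ℕ, N₀ ≤ n → 2 * M * f n ^ t ≤ l * n)
    {ι : Type*} [Fintype ι] {p : ι → ℝ × ℝ} {a b : ι → ℝ} (hab : ∀ i, 0 ≤ a i ∧ 0 ≤ b i)
    (hdisj : Pairwise fun i j => Disjoint (interior (rectangle (p i) (a i) (b i)))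
      (interior (rectangle (p j) (a j) (b j))))
    (harea : ∑ i, a i * b i = ∑' k : {k : ℕ // n ≤ k}, f k ^ (-(2 * t)))
    (hperim : ∑ i, min (a i) (b i) ^ (1 - t) * max (a i) (b i) ≤
      (M : ℝ) ^ (-1 + (1 - t) / 2) * ∑ k ∈ Finset.Icc 1 (n - 1), f k ^ (-(t + (1 - t) * t)))
    (hwidth : ∀ i, min (a i) (b i) ≤ 1) :
    ∃ pos : ℕ → ℝ × ℝ,
      (∀ k ∈ Ico n nmax, square (pos k) (f k ^ (-t)) ⊆ ⋃ i, rectangle (p i) (a i) (b i)) ∧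
      (Ico n nmax).Pairwise fun k k' =>
        Disjoint (interior (square (pos k) (f k ^ (-t))))
          (interior (square (pos k') (f k' ^ (-t)))) := by
  have hK₁ : K ≤ 1 := by
    have hone : (1 : ℝ) ≤ n := Nat.one_le_cast.2 (hN₀.trans hn)
    have hfn := hpos n hone
    have hle : (n : ℝ) ≤ (1 + l) * n := by
      linarith [hlength n hn, show 0 ≤ 2 * M * f n ^ t by positivity]
    have hgrow := (hgrowth n hn).trans (hmono hone (hone.trans hle) hle)
    exact le_of_mul_le_mul_right (by linarith) (hpos _ (hone.trans hle))
  have h50 := fifty_le_rpow ht ⟨by linarith, hK₁⟩ ((le_max_right _ _).trans hM)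
  have hC := lt_rpow_of_rpow_le ht h50 ((le_max_left _ _).trans hM)
  have hM₁ : 1 ≤ M := Nat.one_le_iff_ne_zero.2 fun h => by
    rw [h, Nat.cast_zero, Real.zero_rpow (by linarith [ht.2])] at h50
    norm_num at h50
  exact (isPackingSchedule_rpow_neg ht ⟨hK, hK₁⟩ hM₁ hN₀ hdiff hmono hpos hsum hgrowth hlength
    hderiv hratio h50 hC).exists_squares hn nmax hab hdisj hwidth harea hperim

theorem packing_into_a_family_of_rectangles
    (t δ : ℝ) (ht₁ : 1 / 2 < t) (ht₂ : t < 1) (hδ : δ = 1 - t)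
    (c₁ c₂ d₁ d₂ clv l K : ℝ)
    (hc₁ : 0 < c₁) (hc₂ : 0 < c₂) (hd₁ : 0 < d₁) (hd₂ : 0 < d₂)
    (hclv : 0 < clv) (hl : 0 < l) (hK : 0 < K) (hK' : K ≥ (2 / 3 : ℝ) ^ ((1 : ℝ) / 2))
    (ν₁ ν₂ lam₁ lam₂ : ℕ → ℝ)
    (hν₁ : ∀ n, 0 < ν₁ n) (hν₂ : ∀ n, 0 < ν₂ n)
    (hlam₁ : ∀ n, 0 < lam₁ n) (hlam₂ : ∀ n, 0 < lam₂ n)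
    (ξ₁ ξ₂ η₁ η₂ : ℝ) (hξ₁ : 0 < ξ₁) (hξ₂ : 0 < ξ₂) (hη₁ : 0 < η₁) (hη₂ : 0 < η₂)
    (M N₀ N₁ : ℕ) (hM : 0 < M) (hN₁ : 0 < N₁) (hN₁N₀ : N₁ < N₀)
    (f : ℝ → ℝ)
    (hf_smooth : ContDiffOn ℝ (⊤ : ℕ∞) f (Set.Ici 1))
    (hf_incr : StrictMonoOn f (Set.Ici 1))
    (hf_pos : ∀ x : ℝ, 1 ≤ x → 0 < f x)
    (hf_sum : Summable fun n : {n : ℕ // N₁ ≤ n} => f ((n : ℕ) : ℝ) ^ (-(2 * t)))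
    (cond1 : ∀ n₀ : ℕ, N₀ ≤ n₀ → f (n₀ : ℝ) ≥ K * f ((1 + l) * (n₀ : ℝ)))
    (cond2 : ∀ n₁ : ℕ, N₁ ≤ n₁ →
      c₁ * ξ₁ * ν₁ n₁ / f (n₁ : ℝ) ^ (t + δ * t) ≤
          ∑ n ∈ Finset.Icc 1 (n₁ - 1), f (n : ℝ) ^ (-(t + δ * t)) ∧
        ∑ n ∈ Finset.Icc 1 (n₁ - 1), f (n : ℝ) ^ (-(t + δ * t)) ≤
          c₂ * ξ₂ * ν₂ n₁ / f (n₁ : ℝ) ^ (t + δ * t))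
    (cond3 : ∀ n₁ : ℕ, N₁ ≤ n₁ →
      d₁ * η₁ * lam₁ n₁ / f (n₁ : ℝ) ^ (2 * t) ≤
          (∑' n : {n : ℕ // n₁ ≤ n}, f ((n : ℕ) : ℝ) ^ (-(2 * t))) ∧
        (∑' n : {n : ℕ // n₁ ≤ n}, f ((n : ℕ) : ℝ) ^ (-(2 * t))) ≤
          d₂ * η₂ * lam₂ n₁ / f (n₁ : ℝ) ^ (2 * t))
    (cond4 : ∀ n₀ : ℕ, N₀ ≤ n₀ → lam₁ n₀ ≥ clv * ν₂ n₀)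
    (cond6 : (M : ℝ) ≥
      max ((4 : ℝ) ^ ((1 : ℝ) / (1 - t)) * (c₂ * ξ₂ / (clv * d₁ * η₁)) ^ (2 / (t * (1 - t))))
        ((50 / K ^ (t * (2 - t))) ^ (2 / (1 - t))))
    (cond7 : ∀ n₀ : ℕ, N₀ ≤ n₀ → ∀ x ∈ Set.Icc (n₀ : ℝ) ((n₀ : ℝ) + 9 * (M : ℝ) ^ 2),
      derivWithin f (Set.Ici 1) x ≤ (1 / 4752) * ((M : ℝ) ^ 4)⁻¹ * f (n₀ : ℝ))
    (cond8 : ∀ n₀ : ℕ, N₀ ≤ n₀ →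
      f ((n₀ : ℝ) + 9 * (M : ℝ) ^ 2) ≤ (264 * (M : ℝ) ^ 2) ^ ((1 : ℝ) / t) * f (n₀ : ℝ))
    (cond9 : ∀ n₀ : ℕ, N₀ ≤ n₀ → 9 * (M : ℝ) * f (n₀ : ℝ) ^ t ≤ l * (n₀ : ℝ))
    -- the fixed integers `n_max ≥ n₀ ≥ N₀`
    (n₀ nmax : ℕ) (hn₀ : N₀ ≤ n₀) (hnmax : n₀ ≤ nmax)
    -- the finite family ℛ of rectangles with pairwise disjoint interiors
    (m : ℕ) (p : Fin m → ℝ × ℝ) (a b : Fin m → ℝ)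
    (hab : ∀ i, 0 ≤ a i ∧ 0 ≤ b i)
    (hdisjℛ : Pairwise fun i j : Fin m =>
      Disjoint (interior (rectangle (p i) (a i) (b i)))
        (interior (rectangle (p j) (a j) (b j))))
    -- area(ℛ) = ∑_{n=n₀}^∞ f(n)^{-2t}
    (harea : ∑ i, a i * b i = ∑' n : {n : ℕ // n₀ ≤ n}, f ((n : ℕ) : ℝ) ^ (-(2 * t)))
    -- perim_δ(ℛ) ≤ M^{-1+δ/2} ∑_{n=1}^{n₀-1} f(n)^{-(t+δt)}
    (hperim : ∑ i, min (a i) (b i) ^ δ * max (a i) (b i) ≤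
      (M : ℝ) ^ (-1 + δ / 2) * ∑ n ∈ Finset.Icc 1 (n₀ - 1), f (n : ℝ) ^ (-(t + δ * t)))
    -- sup_{R ∈ ℛ} h(R) ≤ 1
    (hheight : ∀ i, max (a i) (b i) ≤ 1) :
    -- the squares of sidelength f(n)^{-t}, n₀ ≤ n < n_max, can be packed into ⋃_{R∈ℛ} R
    ∃ pos : {n : ℕ // n₀ ≤ n ∧ n < nmax} → ℝ × ℝ,
      (∀ n, square (pos n) (f ((n : ℕ) : ℝ) ^ (-t)) ⊆ ⋃ i, rectangle (p i) (a i) (b i)) ∧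
      Pairwise fun n n' : {n : ℕ // n₀ ≤ n ∧ n < nmax} =>
        Disjoint (interior (square (pos n) (f ((n : ℕ) : ℝ) ^ (-t))))
          (interior (square (pos n') (f ((n' : ℕ) : ℝ) ^ (-t)))) := by
  subst hδ
  have hN₀ : 1 ≤ N₀ := hN₁.trans hN₁N₀
  have hfpos : ∀ n, N₀ ≤ n → 0 < f n := fun n hn => hf_pos n (mod_cast hN₀.trans hn)
  have hK₃ : 3 / 4 ≤ K := by
    refine le_trans ?_ hK'
    rw [← Real.sqrt_eq_rpow]
    exact Real.le_sqrt_of_sq_le (by norm_num)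
  have hlength : ∀ n : ℕ, N₀ ≤ n → 2 * M * f n ^ t ≤ l * n := fun n hn =>
    (cond9 n hn).trans' <| by
      have hfn := hfpos n hn
      gcongr
      norm_num
  have hratio := fun n hn => le_div_mul_rpow_mul (hfpos n hn) (mul_pos hc₂ hξ₂).le
    (mul_pos hd₁ hη₁) hclv (cond2 n (hN₁N₀.le.trans hn)).2 (cond3 n (hN₁N₀.le.trans hn)).1
    (cond4 n hn)
  rw [mul_assoc clv] at cond6
  obtain ⟨pos, hsub, hdisj⟩ := packing_into_a_family_of_rectangles_general
    ⟨by linarith, ht₂⟩ hK₃ hN₀ hn₀ nmax (hf_smooth.differentiableOn (by simp)) hf_incr.monotoneOn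
    hf_pos ((summable_subtype_le_iff N₁).1 hf_sum) cond1 hratio cond6 cond7 hlength hab hdisjℛ
    harea hperim fun i => min_le_max.trans (hheight i)
  exact ⟨fun k => pos k, fun k => hsub k k.2, fun k k' hne =>
    hdisj k.2 k'.2 (Subtype.coe_ne_coe.2 hne)⟩
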